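/- There exist a constant C > 0 and a natural number L such that for every λ ∈ ℂ with 0 < Im λ < ρ and |λ| ≥ ρ, and every measurable f : (0,∞) → ℂ with ‖f‖ := ∫₀^∞ |f(s)| Δ(s) ds < ∞, one has ∫₀^∞ |T_λf(t)| Δ(t) dt ≤ C ‖f‖ (1+|λ|)^L/(ρ − Im λ). (Here ρ − Im λ is the distance from λ to the boundary of the strip {|Im z| ≤ ρ}.) -/

import Mathlib

open Complex MeasureTheory Set

noncomputable section

/-- Gauss hypergeometric function ₂F₁ as a power series sum. -/
def hyp (a b c x : ℂ) : ℂ :=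
  ∑' n : ℕ, (ascPochhammer ℂ n).eval a * (ascPochhammer ℂ n).eval b /
    ((ascPochhammer ℂ n).eval c * (n.factorial : ℂ)) * x ^ n

/-- ρ = (m₁ + 2 m₂)/2 -/
def rho (m₁ m₂ : ℕ) : ℝ := ((m₁ : ℝ) + 2 * m₂) / 2

/-- Δ(t) = (2 sinh t)^(m₁+m₂) (2 cosh t)^(m₂) -/
def Del (m₁ m₂ : ℕ) (t : ℝ) : ℝ :=
  (2 * Real.sinh t) ^ (m₁ + m₂) * (2 * Real.cosh t) ^ m₂

/-- The solution Φ_λ. -/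
def Phi (m₁ m₂ : ℕ) (l : ℂ) (t : ℝ) : ℂ :=
  ((2 * Real.cosh t : ℝ) : ℂ) ^ (Complex.I * l - (rho m₁ m₂ : ℂ)) *
    hyp (((rho m₁ m₂ : ℂ) - Complex.I * l) / 2) (((m₁ : ℂ) + 2) / 4 - Complex.I * l / 2)
      (1 - Complex.I * l) ((((Real.cosh t) ^ 2 : ℝ) : ℂ))⁻¹

/-- The function b_λ. -/
def bfun (m₁ m₂ : ℕ) (l : ℂ) (t : ℝ) : ℂ :=
  (2 : ℂ) ^ (-(rho m₁ m₂ : ℂ) - 1 - Complex.I * l) *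
    (Complex.Gamma (((rho m₁ m₂ : ℂ) - Complex.I * l) / 2) *
      Complex.Gamma (((m₁ : ℂ) + 2) / 4 - Complex.I * l / 2) /
      (Complex.Gamma (((m₁ : ℂ) + (m₂ : ℂ) + 1) / 2) * Complex.Gamma (1 - Complex.I * l))) *
    Phi m₁ m₂ l t

/-- The elementary spherical function φ_λ. -/
def sph (m₁ m₂ : ℕ) (l : ℂ) (t : ℝ) : ℂ :=
  ((Real.cosh t : ℝ) : ℂ) ^ (-((rho m₁ m₂ : ℂ) + Complex.I * l)) *
    hyp (((m₁ : ℂ) + 2) / 4 + Complex.I * l / 2) (((rho m₁ m₂ : ℂ) + Complex.I * l) / 2)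
      (((m₁ : ℂ) + (m₂ : ℂ) + 1) / 2) (((Real.tanh t) ^ 2 : ℝ) : ℂ)

/-- The operator T_λ. -/
def Tfun (m₁ m₂ : ℕ) (l : ℂ) (f : ℝ → ℂ) (t : ℝ) : ℂ :=
  bfun m₁ m₂ l t * (∫ s in Set.Ioi t, f s * sph m₁ m₂ l s * (Del m₁ m₂ s : ℂ)) -
    sph m₁ m₂ l t * (∫ s in Set.Ioi t, f s * bfun m₁ m₂ l s * (Del m₁ m₂ s : ℂ))

open Filter Topology

section PowerSeries

/-- The coefficients of the formally differentiated power series. -/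
def derivCoeff (A : ℕ → ℂ) (n : ℕ) : ℂ := ((n : ℂ) + 1) * A (n + 1)

/-- The power series with coefficients `A` converges absolutely in the open unit disc. -/
def DiscSummable (A : ℕ → ℂ) : Prop :=
  ∀ r : ℝ, 0 ≤ r → r < 1 → Summable fun n => ‖A n‖ * r ^ n

lemma succ_mul_pow_mul_sub_le {r s : ℝ} (hr : 0 ≤ r) (hrs : r ≤ s) (n : ℕ) :
    ((n : ℝ) + 1) * r ^ n * (s - r) ≤ s ^ (n + 1) - r ^ (n + 1) := by
  induction n with
  | zero => simp
  | succ k ih =>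
    have h1 : r * (((k : ℝ) + 1) * r ^ k * (s - r)) ≤ s * (s ^ (k + 1) - r ^ (k + 1)) := by
      have h0 : 0 ≤ ((k : ℝ) + 1) * r ^ k * (s - r) := by
        have := sub_nonneg.2 hrs
        positivity
      exact mul_le_mul hrs ih h0 (hr.trans hrs)
    have h2 : s ^ (k + 1 + 1) - r ^ (k + 1 + 1)
        = s * (s ^ (k + 1) - r ^ (k + 1)) + r ^ (k + 1) * (s - r) := by ring
    have h3 : (((k + 1 : ℕ) : ℝ) + 1) * r ^ (k + 1) * (s - r)
        = r * (((k : ℝ) + 1) * r ^ k * (s - r)) + r ^ (k + 1) * (s - r) := by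
      push_cast
      ring
    linarith

lemma DiscSummable.derivCoeff {A : ℕ → ℂ} (hA : DiscSummable A) :
    DiscSummable (derivCoeff A) := by
  intro r hr hr1
  set s := (1 + r) / 2 with hs
  have hrs : 0 < s - r := by rw [hs]; linarith
  have h := ((summable_nat_add_iff 1).2 (hA s (by rw [hs]; linarith)
    (by rw [hs]; linarith))).mul_left (s - r)⁻¹
  refine Summable.of_nonneg_of_le (fun n => by positivity) (fun n => ?_) h
  have h1 := succ_mul_pow_mul_sub_le hr (by linarith : r ≤ s) n
  have h2 : 0 ≤ r ^ (n + 1) := by positivity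
  have h3 : ‖(n : ℂ) + 1‖ = (n : ℝ) + 1 := by
    have : (n : ℂ) + 1 = ((n + 1 : ℕ) : ℂ) := by push_cast; rfl
    rw [this, Complex.norm_natCast]
    push_cast
    rfl
  have h4 : ((n : ℝ) + 1) * r ^ n ≤ (s - r)⁻¹ * s ^ (n + 1) := by
    rw [le_inv_mul_iff₀ hrs]
    linarith
  calc ‖_root_.derivCoeff A n‖ * r ^ n = ‖A (n + 1)‖ * (((n : ℝ) + 1) * r ^ n) := by
        rw [_root_.derivCoeff, norm_mul, h3]
        ring
    _ ≤ ‖A (n + 1)‖ * ((s - r)⁻¹ * s ^ (n + 1)) := by gcongr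
    _ = _ := by ring

lemma DiscSummable.summable {A : ℕ → ℂ} (hA : DiscSummable A) {x : ℂ} (hx : ‖x‖ < 1) :
    Summable fun n => A n * x ^ n := by
  refine Summable.of_norm ?_
  simpa [norm_mul, norm_pow] using hA ‖x‖ (norm_nonneg _) hx

lemma DiscSummable.hasDerivAt {A : ℕ → ℂ} (hA : DiscSummable A) {x : ℂ} (hx : ‖x‖ < 1) :
    HasDerivAt (fun y => ∑' n, A n * y ^ n) (∑' n, _root_.derivCoeff A n * x ^ n) x := by
  obtain ⟨r, hxr, hr1⟩ := exists_between hx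
  have hr : 0 ≤ r := (norm_nonneg x).trans hxr.le
  have hu := hA.derivCoeff r hr hr1
  have hu' : Summable fun n : ℕ => ‖(n : ℂ) * A n‖ * r ^ (n - 1) := by
    rw [← summable_nat_add_iff 1]
    refine hu.congr fun n => ?_
    simp [_root_.derivCoeff]
  have hmem : x ∈ Metric.ball (0 : ℂ) r := by simpa using hxr
  have h := hasDerivAt_tsum_of_isPreconnected (g := fun n y => A n * y ^ n)
    (g' := fun n y => A n * ((n : ℂ) * y ^ (n - 1))) hu' Metric.isOpen_ball
    (convex_ball (0 : ℂ) r).isPreconnected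
    (fun n y _ => (hasDerivAt_pow n y).const_mul (A n))
    (fun n y hy => by
      have hy' : ‖y‖ ≤ r := by simpa using (Metric.mem_ball.1 hy).le
      rw [← mul_assoc, norm_mul, norm_pow, mul_comm (A n)]
      gcongr) hmem (hA.summable hx) hmem
  have hs : Summable fun n : ℕ => A n * ((n : ℂ) * x ^ (n - 1)) := by
    refine Summable.of_norm_bounded hu' fun n => ?_
    rw [← mul_assoc, norm_mul, norm_pow, mul_comm (A n)]
    gcongr
  have heq : ∑' n : ℕ, A n * ((n : ℂ) * x ^ (n - 1)) = ∑' n, _root_.derivCoeff A n * x ^ n := by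
    rw [hs.tsum_eq_zero_add]
    simp only [Nat.cast_zero, zero_mul, mul_zero, zero_add]
    refine tsum_congr fun n => ?_
    simp [_root_.derivCoeff]
    ring
  rwa [heq] at h

end PowerSeries

section Hypergeometric

/-- The Taylor coefficients of the Gauss hypergeometric function. -/
def hypCoeff (a b c : ℂ) (n : ℕ) : ℂ :=
  (ascPochhammer ℂ n).eval a * (ascPochhammer ℂ n).eval b /
    ((ascPochhammer ℂ n).eval c * (n.factorial : ℂ))

lemma hypCoeff_succ {a b c : ℂ} (hc : 0 < c.re) (n : ℕ) :
    hypCoeff a b c (n + 1) = (a + n) * (b + n) / ((c + n) * (n + 1)) * hypCoeff a b c n := by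
  have hne : ∀ k : ℕ, c + k ≠ 0 := fun k h => by
    have := congrArg Complex.re h
    simp at this
    have h2 : (0 : ℝ) ≤ k := k.cast_nonneg
    linarith
  have h1 : (ascPochhammer ℂ n).eval c ≠ 0 := by
    intro h
    obtain ⟨k, -, hk⟩ := (ascPochhammer_eval_eq_zero_iff _ _).1 h
    exact hne k (by rw [hk]; ring)
  have h2 : (n.factorial : ℂ) ≠ 0 := by exact_mod_cast n.factorial_ne_zero
  have h3 : (n : ℂ) + 1 ≠ 0 := by exact_mod_cast n.succ_ne_zero
  have h4 := hne n
  simp only [hypCoeff, ascPochhammer_succ_eval, Nat.factorial_succ]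
  push_cast
  field_simp

lemma discSummable_hypCoeff (a b : ℂ) {c : ℂ} (hc : 0 < c.re) :
    DiscSummable (hypCoeff a b c) := by
  intro r hr hr1
  obtain ⟨s, hrs, hs1⟩ := exists_between hr1
  have hlim : Tendsto (fun n : ℕ => ‖(a + n) / (c + n) * ((b + n) / (1 + n))‖ * r) atTop
      (𝓝 r) := by
    have h1 : Tendsto (fun n : ℕ => (a + n) / (c + n)) atTop (𝓝 1) := by
      simpa using tendsto_add_mul_div_add_mul_atTop_nhds a c (1 : ℂ) one_ne_zero
    have h2 : Tendsto (fun n : ℕ => (b + n) / (1 + n)) atTop (𝓝 1) := by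
      simpa using tendsto_add_mul_div_add_mul_atTop_nhds b 1 (1 : ℂ) one_ne_zero
    simpa using (h1.mul h2).norm.mul_const r
  refine summable_of_ratio_norm_eventually_le hs1 ?_
  filter_upwards [hlim.eventually (gt_mem_nhds hrs)] with n hn
  have heq : ‖hypCoeff a b c (n + 1)‖ * r ^ (n + 1)
      = (‖(a + n) / (c + n) * ((b + n) / (1 + n))‖ * r) * (‖hypCoeff a b c n‖ * r ^ n) := by
    rw [hypCoeff_succ hc, norm_mul, mul_div_mul_comm, add_comm (n : ℂ) 1]
    ring
  rw [Real.norm_of_nonneg (by positivity), Real.norm_of_nonneg (by positivity), heq]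
  gcongr

lemma hyp_eq_tsum (a b c x : ℂ) : hyp a b c x = ∑' n, hypCoeff a b c n * x ^ n := rfl

lemma hyp_zero (a b c : ℂ) : hyp a b c 0 = 1 := by
  rw [hyp_eq_tsum, tsum_eq_single 0]
  · simp [hypCoeff]
  · intro n hn
    simp [hn]

/-- The termwise derivative of the hypergeometric function. -/
def hypDeriv (a b c x : ℂ) : ℂ := ∑' n, derivCoeff (hypCoeff a b c) n * x ^ n

/-- The termwise second derivative of the hypergeometric function. -/
def hypDeriv₂ (a b c x : ℂ) : ℂ := ∑' n, derivCoeff (derivCoeff (hypCoeff a b c)) n * x ^ n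

lemma hasDerivAt_hyp (a b : ℂ) {c x : ℂ} (hc : 0 < c.re) (hx : ‖x‖ < 1) :
    HasDerivAt (hyp a b c) (hypDeriv a b c x) x :=
  (discSummable_hypCoeff a b hc).hasDerivAt hx

lemma hasDerivAt_hypDeriv (a b : ℂ) {c x : ℂ} (hc : 0 < c.re) (hx : ‖x‖ < 1) :
    HasDerivAt (hypDeriv a b c) (hypDeriv₂ a b c x) x :=
  (discSummable_hypCoeff a b hc).derivCoeff.hasDerivAt hx

/-- The power series of `x * F'` obtained from that of `F`. -/
lemma DiscSummable.hasSum_mul_deriv {A : ℕ → ℂ} (hA : DiscSummable A) {x : ℂ} (hx : ‖x‖ < 1) :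
    HasSum (fun n : ℕ => (n : ℂ) * A n * x ^ n) (x * ∑' n, _root_.derivCoeff A n * x ^ n) := by
  rw [← hasSum_nat_add_iff' 1]
  simp only [Finset.sum_range_one, Nat.cast_zero, zero_mul, sub_zero]
  refine ((hA.derivCoeff.summable hx).hasSum.mul_left x).congr_fun fun n => ?_
  simp only [_root_.derivCoeff]
  push_cast
  ring

/-- The hypergeometric differential equation. -/
lemma hyp_ode (a b : ℂ) {c x : ℂ} (hc : 0 < c.re) (hx : ‖x‖ < 1) :
    x * (1 - x) * hypDeriv₂ a b c x + (c - (a + b + 1) * x) * hypDeriv a b c x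
      - a * b * hyp a b c x = 0 := by
  have hA := discSummable_hypCoeff a b hc
  set A := hypCoeff a b c with hAdef
  have h0 : HasSum (fun n => A n * x ^ n) (hyp a b c x) := (hA.summable hx).hasSum
  have h1 : HasSum (fun n => derivCoeff A n * x ^ n) (hypDeriv a b c x) :=
    (hA.derivCoeff.summable hx).hasSum
  have h2 : HasSum (fun n : ℕ => (n : ℂ) * A n * x ^ n) (x * hypDeriv a b c x) :=
    hA.hasSum_mul_deriv hx
  have h3 : HasSum (fun n : ℕ => (n : ℂ) * derivCoeff A n * x ^ n) (x * hypDeriv₂ a b c x) :=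
    hA.derivCoeff.hasSum_mul_deriv hx
  have h4 : HasSum (fun n : ℕ => (n : ℂ) * ((n : ℂ) - 1) * A n * x ^ n)
      (x * (x * hypDeriv₂ a b c x)) := by
    rw [← hasSum_nat_add_iff' 1]
    simp only [Finset.sum_range_one, Nat.cast_zero, zero_mul, sub_zero]
    refine (h3.mul_left x).congr_fun fun n => ?_
    simp only [derivCoeff]
    push_cast
    ring
  have key := (((h3.sub h4).add (h1.mul_left c)).sub (h2.mul_left (a + b + 1))).sub
    (h0.mul_left (a * b))
  have hz : ∀ n : ℕ, (n : ℂ) * derivCoeff A n * x ^ n - (n : ℂ) * ((n : ℂ) - 1) * A n * x ^ n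
      + c * (derivCoeff A n * x ^ n) - (a + b + 1) * ((n : ℂ) * A n * x ^ n)
      - a * b * (A n * x ^ n) = 0 := by
    intro n
    have h5 : (n : ℂ) + 1 ≠ 0 := by exact_mod_cast n.succ_ne_zero
    have h6 : c + n ≠ 0 := fun h => by
      have := congrArg Complex.re h
      simp at this
      have h2 : (0 : ℝ) ≤ n := n.cast_nonneg
      linarith
    have h7 : (c + n) * derivCoeff A n = (a + n) * (b + n) * A n := by
      rw [derivCoeff, hAdef, hypCoeff_succ hc]
      field_simp
    linear_combination x ^ n * h7
  rw [funext hz] at key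
  have := key.unique hasSum_zero
  linear_combination this

end Hypergeometric

section Density

/-- The logarithmic derivative of `Del`. -/
def logDel (m₁ m₂ : ℕ) (t : ℝ) : ℝ :=
  ((m₁ : ℝ) + m₂) * (Real.cosh t / Real.sinh t) + m₂ * (Real.sinh t / Real.cosh t)

/-- The normalized density `exp (-2ρt) * Del t`. -/
def normDel (m₁ m₂ : ℕ) (t : ℝ) : ℝ :=
  (1 - Real.exp (-2 * t)) ^ (m₁ + m₂) * (1 + Real.exp (-2 * t)) ^ m₂

lemma two_rho (m₁ m₂ : ℕ) : 2 * rho m₁ m₂ = ((m₁ + m₂ : ℕ) : ℝ) + m₂ := by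
  rw [rho]
  push_cast
  ring

lemma rho_pos {m₁ : ℕ} (hm₁ : 1 ≤ m₁) (m₂ : ℕ) : 0 < rho m₁ m₂ := by
  have h1 : (1 : ℝ) ≤ m₁ := by exact_mod_cast hm₁
  have h2 : (0 : ℝ) ≤ m₂ := m₂.cast_nonneg
  rw [rho]
  linarith

lemma Del_eq (m₁ m₂ : ℕ) (t : ℝ) :
    Del m₁ m₂ t = Real.exp (2 * rho m₁ m₂ * t) * normDel m₁ m₂ t := by
  have h1 : 2 * Real.sinh t = Real.exp t * (1 - Real.exp (-2 * t)) := by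
    have : Real.exp (-t) = Real.exp t * Real.exp (-2 * t) := by
      rw [← Real.exp_add]; congr 1; ring
    rw [Real.sinh_eq, this]
    ring
  have h2 : 2 * Real.cosh t = Real.exp t * (1 + Real.exp (-2 * t)) := by
    have : Real.exp (-t) = Real.exp t * Real.exp (-2 * t) := by
      rw [← Real.exp_add]; congr 1; ring
    rw [Real.cosh_eq, this]
    ring
  have h3 : Real.exp (2 * rho m₁ m₂ * t) = Real.exp t ^ (m₁ + m₂) * Real.exp t ^ m₂ := by
    rw [two_rho, ← Real.exp_nat_mul, ← Real.exp_nat_mul, ← Real.exp_add]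
    congr 1
    ring
  rw [Del, normDel, h1, h2, h3, mul_pow, mul_pow]
  ring

lemma exp_neg_two_mul_lt_one {t : ℝ} (ht : 0 < t) : Real.exp (-2 * t) < 1 :=
  Real.exp_lt_one_iff.2 (by linarith)

lemma normDel_pos (m₁ m₂ : ℕ) {t : ℝ} (ht : 0 < t) : 0 < normDel m₁ m₂ t := by
  have h := exp_neg_two_mul_lt_one ht
  have h1 : 0 < 1 - Real.exp (-2 * t) := by linarith
  rw [normDel]
  positivity

lemma normDel_le (m₁ m₂ : ℕ) {t : ℝ} (ht : 0 < t) : normDel m₁ m₂ t ≤ 2 ^ m₂ := by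
  have h := exp_neg_two_mul_lt_one ht
  have h0 := Real.exp_pos (-2 * t)
  rw [normDel]
  calc (1 - Real.exp (-2 * t)) ^ (m₁ + m₂) * (1 + Real.exp (-2 * t)) ^ m₂
      ≤ 1 * 2 ^ m₂ := by
        gcongr
        · exact pow_le_one₀ (by linarith) (by linarith)
        · linarith
    _ = _ := one_mul _

lemma Del_pos (m₁ m₂ : ℕ) {t : ℝ} (ht : 0 < t) : 0 < Del m₁ m₂ t := by
  rw [Del_eq]
  exact mul_pos (Real.exp_pos _) (normDel_pos m₁ m₂ ht)

lemma tendsto_normDel (m₁ m₂ : ℕ) : Tendsto (normDel m₁ m₂) atTop (𝓝 1) := by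
  have h : Tendsto (fun t : ℝ => Real.exp (-2 * t)) atTop (𝓝 0) :=
    Real.tendsto_exp_atBot.comp (tendsto_id.const_mul_atTop_of_neg (by norm_num))
  have := ((h.const_sub 1).pow (m₁ + m₂)).mul ((h.const_add 1).pow m₂)
  simp only [sub_zero, add_zero, one_pow, mul_one] at this
  exact this

lemma HasDerivAt.pow_of_ne_zero {f : ℝ → ℝ} {f' t : ℝ} (hf : HasDerivAt f f' t) (h0 : f t ≠ 0)
    (n : ℕ) : HasDerivAt (fun s => f s ^ n) (n * (f' / f t) * f t ^ n) t := by
  cases n with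
  | zero => simpa using hasDerivAt_const t (1 : ℝ)
  | succ k =>
    convert! hf.pow (k + 1) using 1
    rw [Nat.add_sub_cancel]
    field_simp
    ring

lemma hasDerivAt_Del (m₁ m₂ : ℕ) {t : ℝ} (ht : 0 < t) :
    HasDerivAt (Del m₁ m₂) (logDel m₁ m₂ t * Del m₁ m₂ t) t := by
  have hs : 2 * Real.sinh t ≠ 0 := by
    have := Real.sinh_pos_iff.2 ht
    positivity
  have hc : 2 * Real.cosh t ≠ 0 := by
    have := Real.cosh_pos t
    positivity
  have h1 := ((Real.hasDerivAt_sinh t).const_mul 2).pow_of_ne_zero hs (m₁ + m₂)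
  have h2 := ((Real.hasDerivAt_cosh t).const_mul 2).pow_of_ne_zero hc m₂
  convert! h1.mul h2 using 1
  rw [Del, logDel]
  push_cast
  field_simp

lemma hasDerivAt_normDel (m₁ m₂ : ℕ) {t : ℝ} (ht : 0 < t) :
    HasDerivAt (normDel m₁ m₂)
      ((logDel m₁ m₂ t - 2 * rho m₁ m₂) * normDel m₁ m₂ t) t := by
  have heq : normDel m₁ m₂ = fun s => Real.exp (-(2 * rho m₁ m₂) * s) * Del m₁ m₂ s := by
    ext s
    rw [Del_eq, ← mul_assoc, ← Real.exp_add]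
    simp
  have h1 : HasDerivAt (fun s : ℝ => Real.exp (-(2 * rho m₁ m₂) * s))
      (Real.exp (-(2 * rho m₁ m₂) * t) * (-(2 * rho m₁ m₂))) t :=
    (hasDerivAt_const_mul (-(2 * rho m₁ m₂))).exp
  rw [heq]
  convert! h1.mul (hasDerivAt_Del m₁ m₂ ht) using 1
  ring

lemma two_rho_le_logDel (m₁ m₂ : ℕ) {t : ℝ} (ht : 0 < t) :
    2 * rho m₁ m₂ ≤ logDel m₁ m₂ t := by
  have hs := Real.sinh_pos_iff.2 ht
  have hc := Real.cosh_pos t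
  have hsc := (Real.sinh_lt_cosh t).le
  have h1 : 1 ≤ Real.cosh t / Real.sinh t := (one_le_div hs).2 hsc
  have h2 : 2 ≤ Real.cosh t / Real.sinh t + Real.sinh t / Real.cosh t := by
    rw [div_add_div _ _ hs.ne' hc.ne', le_div_iff₀ (by positivity)]
    nlinarith [sq_nonneg (Real.cosh t - Real.sinh t)]
  have h3 : (0 : ℝ) ≤ m₁ := m₁.cast_nonneg
  have h4 : (0 : ℝ) ≤ m₂ := m₂.cast_nonneg
  rw [rho, logDel]
  nlinarith [mul_le_mul_of_nonneg_left h1 h3, mul_le_mul_of_nonneg_left h2 h4]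

lemma logDel_nonneg {m₁ m₂ : ℕ} {t : ℝ} (ht : 0 < t) : 0 ≤ logDel m₁ m₂ t := by
  refine le_trans ?_ (two_rho_le_logDel m₁ m₂ ht)
  rw [two_rho]
  positivity

lemma monotoneOn_Ioi_of_hasDerivAt {g g' : ℝ → ℝ} (h : ∀ t, 0 < t → HasDerivAt g (g' t) t)
    (h0 : ∀ t, 0 < t → 0 ≤ g' t) : MonotoneOn g (Ioi 0) := by
  refine monotoneOn_of_deriv_nonneg (convex_Ioi 0)
    (fun t ht => (h t ht).continuousAt.continuousWithinAt)
    (fun t ht => ?_) (fun t ht => ?_) <;> rw [interior_Ioi] at ht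
  · exact (h t ht).differentiableAt.differentiableWithinAt
  · rw [(h t ht).deriv]
    exact h0 t ht

lemma monotoneOn_normDel (m₁ m₂ : ℕ) : MonotoneOn (normDel m₁ m₂) (Ioi 0) :=
  monotoneOn_Ioi_of_hasDerivAt (fun _ ht => hasDerivAt_normDel m₁ m₂ ht) fun _ ht =>
    mul_nonneg (sub_nonneg.2 (two_rho_le_logDel m₁ m₂ ht)) (normDel_pos m₁ m₂ ht).le

end Density

section Energy

open ComplexConjugate

variable {m₁ m₂ : ℕ} {μ : ℂ} {u u' : ℝ → ℂ}

/-- `u` is a solution of the radial eigenvalue equation on `(0, ∞)` with derivative `u'` and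
spectral parameter `μ = -iλ`. -/
structure IsJacobiSolution (m₁ m₂ : ℕ) (μ : ℂ) (u u' : ℝ → ℂ) : Prop where
  hasDerivAt : ∀ t, 0 < t → HasDerivAt u (u' t) t
  hasDerivAt_deriv : ∀ t, 0 < t → HasDerivAt u'
    (-(logDel m₁ m₂ t : ℂ) * u' t - ((rho m₁ m₂ : ℂ) ^ 2 - μ ^ 2) * u t) t

/-- The energy adapted to small `t`. -/
def localEnergy (μ : ℂ) (u u' : ℝ → ℂ) (t : ℝ) : ℝ := ‖u' t‖ ^ 2 + ‖μ‖ ^ 2 * ‖u t‖ ^ 2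

/-- The energy adapted to large `t`. -/
def shiftedEnergy (r : ℝ) (μ : ℂ) (u u' : ℝ → ℂ) (t : ℝ) : ℝ :=
  ‖u' t + r * u t‖ ^ 2 + ‖μ‖ ^ 2 * ‖u t‖ ^ 2

lemma shiftedEnergy_le {r : ℝ} (hr : 0 ≤ r) (hrμ : r ≤ ‖μ‖) (t : ℝ) :
    shiftedEnergy r μ u u' t ≤ 3 * localEnergy μ u u' t := by
  have h1 : ‖u' t + r * u t‖ ≤ ‖u' t‖ + r * ‖u t‖ := by
    refine (norm_add_le _ _).trans ?_
    simp [abs_of_nonneg hr]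
  have h2 : r * ‖u t‖ ≤ ‖μ‖ * ‖u t‖ := by gcongr
  have h3 : ‖u' t + r * u t‖ ^ 2 ≤ (‖u' t‖ + ‖μ‖ * ‖u t‖) ^ 2 := by
    gcongr
    linarith
  rw [shiftedEnergy, localEnergy]
  nlinarith [sq_nonneg (‖u' t‖ - ‖μ‖ * ‖u t‖)]

lemma localEnergy_le {r : ℝ} (hr : 0 ≤ r) (hrμ : r ≤ ‖μ‖) (t : ℝ) :
    localEnergy μ u u' t ≤ 3 * shiftedEnergy r μ u u' t := by
  have h1 : ‖u' t‖ ≤ ‖u' t + r * u t‖ + r * ‖u t‖ := by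
    have := norm_sub_le (u' t + r * u t) (r * u t)
    simpa [abs_of_nonneg hr] using this
  have h2 : r * ‖u t‖ ≤ ‖μ‖ * ‖u t‖ := by gcongr
  have h3 : ‖u' t‖ ^ 2 ≤ (‖u' t + r * u t‖ + ‖μ‖ * ‖u t‖) ^ 2 := by
    gcongr
    linarith
  rw [shiftedEnergy, localEnergy]
  nlinarith [sq_nonneg (‖u' t + r * u t‖ - ‖μ‖ * ‖u t‖)]

lemma abs_re_conj_mul_le (v w z : ℂ) : |(conj v * (w * z)).re| ≤ ‖v‖ * ‖w‖ * ‖z‖ := by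
  refine (Complex.abs_re_le_norm _).trans_eq ?_
  rw [norm_mul, norm_mul, RCLike.norm_conj, mul_assoc]

lemma re_conj_mul_self (v : ℂ) : (conj v * v).re = ‖v‖ ^ 2 := by
  rw [← Complex.normSq_eq_conj_mul_self, Complex.ofReal_re, Complex.normSq_eq_norm_sq]

lemma norm_sq_add_sq (μ : ℂ) : μ ^ 2 + (‖μ‖ : ℂ) ^ 2 = 2 * μ.re * μ := by
  have h1 : (‖μ‖ : ℂ) ^ 2 = μ * conj μ := by rw [Complex.mul_conj, Complex.normSq_eq_norm_sq]; simp
  have h2 : μ + conj μ = 2 * μ.re := by rw [Complex.add_conj]; simp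
  linear_combination h1 + μ * h2

lemma IsJacobiSolution.hasDerivAt_localEnergy (h : IsJacobiSolution m₁ m₂ μ u u') {t : ℝ}
    (ht : 0 < t) : HasDerivAt (localEnergy μ u u')
      (-(2 * logDel m₁ m₂ t) * ‖u' t‖ ^ 2
        + 2 * (conj (u' t) * (u t * (2 * μ.re * μ - (rho m₁ m₂ : ℂ) ^ 2))).re) t := by
  have h1 := (h.hasDerivAt_deriv t ht).norm_sq.add ((h.hasDerivAt t ht).norm_sq.const_mul (‖μ‖ ^ 2))
  convert! h1 using 1
  rw [← norm_sq_add_sq, Complex.inner, Complex.inner, ← re_conj_mul_self (u' t)]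
  have e : (‖μ‖ : ℂ) ^ 2 = ((‖μ‖ ^ 2 : ℝ) : ℂ) := by push_cast; rfl
  rw [e, show (rho m₁ m₂ : ℂ) ^ 2 = ((rho m₁ m₂ ^ 2 : ℝ) : ℂ) by push_cast; rfl]
  simp only [Complex.mul_re, Complex.mul_im, Complex.add_re, Complex.add_im, Complex.sub_re,
    Complex.sub_im, Complex.neg_re, Complex.neg_im, Complex.conj_re, Complex.conj_im,
    Complex.ofReal_re, Complex.ofReal_im]
  ring

lemma IsJacobiSolution.hasDerivAt_shiftedEnergy (h : IsJacobiSolution m₁ m₂ μ u u') {t : ℝ}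
    (ht : 0 < t) : HasDerivAt (shiftedEnergy (rho m₁ m₂) μ u u')
      (-(2 * (logDel m₁ m₂ t - rho m₁ m₂)) * ‖u' t + rho m₁ m₂ * u t‖ ^ 2
        - 2 * rho m₁ m₂ * (‖μ‖ ^ 2 * ‖u t‖ ^ 2)
        + 2 * (conj (u' t + rho m₁ m₂ * u t) * (u t *
          ((logDel m₁ m₂ t - 2 * rho m₁ m₂) * rho m₁ m₂ : ℝ))).re
        + 2 * (conj (u' t + rho m₁ m₂ * u t) * (u t * (2 * μ.re * μ))).re) t := by
  have h1 := ((h.hasDerivAt_deriv t ht).add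
    ((h.hasDerivAt t ht).const_mul (rho m₁ m₂ : ℂ))).norm_sq.add
      ((h.hasDerivAt t ht).norm_sq.const_mul (‖μ‖ ^ 2))
  convert! h1 using 1
  rw [← norm_sq_add_sq, Complex.inner, Complex.inner, ← re_conj_mul_self (u' t + _),
    ← re_conj_mul_self (u t)]
  have e : (‖μ‖ : ℂ) ^ 2 = ((‖μ‖ ^ 2 : ℝ) : ℂ) := by push_cast; rfl
  rw [e, show (rho m₁ m₂ : ℂ) ^ 2 = ((rho m₁ m₂ ^ 2 : ℝ) : ℂ) by push_cast; rfl]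
  simp only [Pi.add_apply, Complex.mul_re, Complex.mul_im, Complex.add_re, Complex.add_im,
    Complex.sub_re, Complex.sub_im, Complex.neg_re, Complex.neg_im, Complex.conj_re,
    Complex.conj_im, Complex.ofReal_re, Complex.ofReal_im]
  ring

lemma two_mul_mul_le_sq_add {a b : ℝ} : 2 * (a * b) ≤ a ^ 2 + b ^ 2 := by
  nlinarith [sq_nonneg (a - b)]

lemma abs_localEnergy_error_le {r : ℝ} (hr : 0 < r) (hrμ : r ≤ ‖μ‖) (h0 : 0 ≤ μ.re)
    (h1 : μ.re ≤ r) (t : ℝ) :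
    |2 * (conj (u' t) * (u t * (2 * μ.re * μ - (r : ℂ) ^ 2))).re|
      ≤ 3 * r * localEnergy μ u u' t := by
  have h2 : ‖2 * μ.re * μ - (r : ℂ) ^ 2‖ ≤ 3 * r * ‖μ‖ := by
    calc ‖2 * μ.re * μ - (r : ℂ) ^ 2‖ ≤ ‖2 * (μ.re : ℂ) * μ‖ + ‖(r : ℂ) ^ 2‖ := norm_sub_le _ _
      _ = 2 * μ.re * ‖μ‖ + r * r := by
        simp [abs_of_nonneg h0, sq]
      _ ≤ 2 * r * ‖μ‖ + r * ‖μ‖ := by gcongr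
      _ = _ := by ring
  have h3 := abs_re_conj_mul_le (u' t) (u t) (2 * μ.re * μ - (r : ℂ) ^ 2)
  have h4 : ‖u' t‖ * ‖u t‖ * ‖2 * μ.re * μ - (r : ℂ) ^ 2‖ ≤ ‖u' t‖ * ‖u t‖ * (3 * r * ‖μ‖) := by
    gcongr
  have h5 : 2 * (‖u' t‖ * (‖μ‖ * ‖u t‖)) ≤ localEnergy μ u u' t := by
    rw [localEnergy, ← mul_pow]
    exact two_mul_mul_le_sq_add
  rw [abs_mul, abs_two]
  nlinarith

lemma abs_shiftedEnergy_error_le {r : ℝ} (h0 : 0 ≤ μ.re) (t : ℝ) :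
    |2 * (conj (u' t + r * u t) * (u t * (2 * μ.re * μ))).re|
      ≤ 2 * μ.re * shiftedEnergy r μ u u' t := by
  have h3 := abs_re_conj_mul_le (u' t + r * u t) (u t) (2 * μ.re * μ)
  have h4 : ‖2 * (μ.re : ℂ) * μ‖ = 2 * μ.re * ‖μ‖ := by simp [abs_of_nonneg h0]
  have h5 : 2 * (‖u' t + r * u t‖ * (‖μ‖ * ‖u t‖)) ≤ shiftedEnergy r μ u u' t := by
    rw [shiftedEnergy, ← mul_pow]
    exact two_mul_mul_le_sq_add
  rw [abs_mul, abs_two]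
  rw [h4] at h3
  nlinarith [mul_le_mul_of_nonneg_left h5 h0]

lemma abs_shiftedEnergy_damping_le {r s : ℝ} (hr : 0 ≤ r) (hs : 0 ≤ s) (hrμ : r ≤ ‖μ‖) (t : ℝ) :
    |2 * (conj (u' t + r * u t) * (u t * (s * r : ℝ))).re|
      ≤ s * shiftedEnergy r μ u u' t := by
  have h3 := abs_re_conj_mul_le (u' t + r * u t) (u t) (s * r : ℝ)
  have h4 : ‖((s * r : ℝ) : ℂ)‖ = s * r := by
    rw [Complex.norm_real, Real.norm_of_nonneg (by positivity)]
  have h5 : 2 * (‖u' t + r * u t‖ * (‖μ‖ * ‖u t‖)) ≤ shiftedEnergy r μ u u' t := by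
    rw [shiftedEnergy, ← mul_pow]
    exact two_mul_mul_le_sq_add
  have h6 : ‖u' t + r * u t‖ * (r * ‖u t‖) ≤ ‖u' t + r * u t‖ * (‖μ‖ * ‖u t‖) := by gcongr
  rw [abs_mul, abs_two]
  rw [h4] at h3
  nlinarith [mul_le_mul_of_nonneg_left h5 hs, mul_le_mul_of_nonneg_left h6 hs]

lemma localEnergy_nonneg (t : ℝ) : 0 ≤ localEnergy μ u u' t := by
  rw [localEnergy]
  positivity

lemma shiftedEnergy_nonneg {r : ℝ} (t : ℝ) : 0 ≤ shiftedEnergy r μ u u' t := by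
  rw [shiftedEnergy]
  positivity

lemma hasDerivAt_exp_mul (k t : ℝ) :
    HasDerivAt (fun s : ℝ => Real.exp (k * s)) (Real.exp (k * t) * k) t :=
  (hasDerivAt_const_mul k).exp

lemma IsJacobiSolution.monotoneOn_localEnergy (h : IsJacobiSolution m₁ m₂ μ u u')
    (hr : 0 < rho m₁ m₂) (hrμ : rho m₁ m₂ ≤ ‖μ‖) (h0 : 0 ≤ μ.re) (h1 : μ.re ≤ rho m₁ m₂) :
    MonotoneOn (fun t => localEnergy μ u u' t * Del m₁ m₂ t ^ 2 * Real.exp (3 * rho m₁ m₂ * t))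
      (Ioi 0) := by
  refine monotoneOn_Ioi_of_hasDerivAt (fun t ht => ((h.hasDerivAt_localEnergy ht).mul
    ((hasDerivAt_Del m₁ m₂ ht).pow 2)).mul (hasDerivAt_exp_mul _ t)) fun t ht => ?_
  have e1 := (abs_le.1 (abs_localEnergy_error_le (u := u) (u' := u') hr hrμ h0 h1 t)).1
  set X := 2 * (conj (u' t) * (u t * (2 * μ.re * μ - (rho m₁ m₂ : ℂ) ^ 2))).re
  have e2 : ‖u' t‖ ^ 2 ≤ localEnergy μ u u' t := by
    rw [localEnergy]
    have : 0 ≤ ‖μ‖ ^ 2 * ‖u t‖ ^ 2 := by positivity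
    linarith
  have e3 := mul_le_mul_of_nonneg_left e2 (logDel_nonneg (m₁ := m₁) (m₂ := m₂) ht)
  have e4 := Del_pos m₁ m₂ ht
  have e5 : 0 ≤ (2 * logDel m₁ m₂ t * (localEnergy μ u u' t - ‖u' t‖ ^ 2)
      + (X + 3 * rho m₁ m₂ * localEnergy μ u u' t)) * Del m₁ m₂ t ^ 2
        * Real.exp (3 * rho m₁ m₂ * t) := by
    have : 0 ≤ 2 * logDel m₁ m₂ t * (localEnergy μ u u' t - ‖u' t‖ ^ 2)
      + (X + 3 * rho m₁ m₂ * localEnergy μ u u' t) := by linarith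
    positivity
  refine e5.trans_eq ?_
  simp only [Pi.mul_apply, Pi.pow_apply]
  push_cast
  ring

lemma IsJacobiSolution.antitoneOn_localEnergy (h : IsJacobiSolution m₁ m₂ μ u u')
    (hu : Continuous u) (hu' : Continuous u')
    (hr : 0 < rho m₁ m₂) (hrμ : rho m₁ m₂ ≤ ‖μ‖) (h0 : 0 ≤ μ.re) (h1 : μ.re ≤ rho m₁ m₂) :
    AntitoneOn (fun t => localEnergy μ u u' t * Real.exp (-(3 * rho m₁ m₂) * t)) (Ici 0) := by
  have hd : ∀ t : ℝ, 0 < t → HasDerivAt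
      (fun t => localEnergy μ u u' t * Real.exp (-(3 * rho m₁ m₂) * t)) _ t := fun t ht =>
    (h.hasDerivAt_localEnergy ht).mul (hasDerivAt_exp_mul (-(3 * rho m₁ m₂)) t)
  refine antitoneOn_of_deriv_nonpos (convex_Ici 0) ?_ (fun t ht => ?_) (fun t ht => ?_)
  · unfold localEnergy
    fun_prop
  · rw [interior_Ici] at ht
    exact (hd t ht).differentiableAt.differentiableWithinAt
  · rw [interior_Ici] at ht
    rw [(hd t ht).deriv]
    have e1 := (abs_le.1 (abs_localEnergy_error_le (u := u) (u' := u') hr hrμ h0 h1 t)).2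
    set X := 2 * (conj (u' t) * (u t * (2 * μ.re * μ - (rho m₁ m₂ : ℂ) ^ 2))).re
    have e3 := mul_nonneg (logDel_nonneg (m₁ := m₁) (m₂ := m₂) ht) (sq_nonneg ‖u' t‖)
    have e5 : 0 ≤ (2 * (logDel m₁ m₂ t * ‖u' t‖ ^ 2)
        + (3 * rho m₁ m₂ * localEnergy μ u u' t - X)) * Real.exp (-(3 * rho m₁ m₂) * t) := by
      have : 0 ≤ 2 * (logDel m₁ m₂ t * ‖u' t‖ ^ 2)
        + (3 * rho m₁ m₂ * localEnergy μ u u' t - X) := by linarith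
      positivity
    linarith

lemma IsJacobiSolution.antitoneOn_shiftedEnergy (h : IsJacobiSolution m₁ m₂ μ u u')
    (hr : 0 < rho m₁ m₂) (hrμ : rho m₁ m₂ ≤ ‖μ‖) (h0 : 0 ≤ μ.re) :
    MonotoneOn (fun t => -(shiftedEnergy (rho m₁ m₂) μ u u' t * (normDel m₁ m₂ t)⁻¹
      * Real.exp ((2 * rho m₁ m₂ - 2 * μ.re) * t))) (Ioi 0) := by
  refine monotoneOn_Ioi_of_hasDerivAt (fun t ht => (((h.hasDerivAt_shiftedEnergy ht).mul
    ((hasDerivAt_normDel m₁ m₂ ht).inv (normDel_pos m₁ m₂ ht).ne')).mul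
      (hasDerivAt_exp_mul _ t)).neg) fun t ht => ?_
  have hs := sub_nonneg.2 (two_rho_le_logDel m₁ m₂ ht)
  have e1 := (abs_le.1 (abs_shiftedEnergy_error_le (u := u) (u' := u') (r := rho m₁ m₂) h0 t)).2
  have e2 := (abs_le.1 (abs_shiftedEnergy_damping_le (u := u) (u' := u') hr.le hs hrμ t)).2
  set X := 2 * (conj (u' t + rho m₁ m₂ * u t) * (u t * (2 * μ.re * μ))).re
  set Y := 2 * (conj (u' t + rho m₁ m₂ * u t) * (u t *
          ((logDel m₁ m₂ t - 2 * rho m₁ m₂) * rho m₁ m₂ : ℝ))).re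
  set s := logDel m₁ m₂ t - 2 * rho m₁ m₂ with hsdef
  set v := ‖u' t + rho m₁ m₂ * u t‖ ^ 2 with hv
  have e4 := normDel_pos m₁ m₂ ht
  have hv0 : 0 ≤ v := sq_nonneg _
  have e5 : 0 ≤ (2 * μ.re * shiftedEnergy (rho m₁ m₂) μ u u' t - X
      + (s * shiftedEnergy (rho m₁ m₂) μ u u' t - Y) + 2 * s * v) * (normDel m₁ m₂ t)⁻¹
        * Real.exp ((2 * rho m₁ m₂ - 2 * μ.re) * t) := by
    have : 0 ≤ 2 * μ.re * shiftedEnergy (rho m₁ m₂) μ u u' t - X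
      + (s * shiftedEnergy (rho m₁ m₂) μ u u' t - Y) + 2 * s * v := by
      have := mul_nonneg hs hv0
      linarith
    positivity
  refine e5.trans_eq ?_
  have e6 : logDel m₁ m₂ t = s + 2 * rho m₁ m₂ := by rw [hsdef]; ring
  have e7 : ‖μ‖ ^ 2 * ‖u t‖ ^ 2 = shiftedEnergy (rho m₁ m₂) μ u u' t - v := by
    rw [shiftedEnergy]; ring
  simp only [Pi.mul_apply, Pi.inv_apply]
  rw [e6, e7]
  field_simp
  ring

lemma IsJacobiSolution.monotoneOn_shiftedEnergy (h : IsJacobiSolution m₁ m₂ μ u u')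
    (hr : 0 < rho m₁ m₂) (hrμ : rho m₁ m₂ ≤ ‖μ‖) (h0 : 0 ≤ μ.re) :
    MonotoneOn (fun t => shiftedEnergy (rho m₁ m₂) μ u u' t * normDel m₁ m₂ t ^ 3
      * Real.exp ((2 * rho m₁ m₂ + 2 * μ.re) * t)) (Ioi 0) := by
  refine monotoneOn_Ioi_of_hasDerivAt (fun t ht => ((h.hasDerivAt_shiftedEnergy ht).mul
    ((hasDerivAt_normDel m₁ m₂ ht).pow 3)).mul (hasDerivAt_exp_mul _ t)) fun t ht => ?_
  have hs := sub_nonneg.2 (two_rho_le_logDel m₁ m₂ ht)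
  have e1 := (abs_le.1 (abs_shiftedEnergy_error_le (u := u) (u' := u') (r := rho m₁ m₂) h0 t)).1
  have e2 := (abs_le.1 (abs_shiftedEnergy_damping_le (u := u) (u' := u') hr.le hs hrμ t)).1
  set X := 2 * (conj (u' t + rho m₁ m₂ * u t) * (u t * (2 * μ.re * μ))).re
  set Y := 2 * (conj (u' t + rho m₁ m₂ * u t) * (u t *
          ((logDel m₁ m₂ t - 2 * rho m₁ m₂) * rho m₁ m₂ : ℝ))).re
  set s := logDel m₁ m₂ t - 2 * rho m₁ m₂ with hsdef
  set v := ‖u' t + rho m₁ m₂ * u t‖ ^ 2 with hv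
  have e4 := normDel_pos m₁ m₂ ht
  have e7 : ‖μ‖ ^ 2 * ‖u t‖ ^ 2 = shiftedEnergy (rho m₁ m₂) μ u u' t - v := by
    rw [shiftedEnergy]; ring
  have e8 : 0 ≤ shiftedEnergy (rho m₁ m₂) μ u u' t - v := by
    rw [← e7]
    positivity
  have e5 : 0 ≤ (2 * μ.re * shiftedEnergy (rho m₁ m₂) μ u u' t + X
      + (s * shiftedEnergy (rho m₁ m₂) μ u u' t + Y)
      + 2 * (s * (shiftedEnergy (rho m₁ m₂) μ u u' t - v))) * normDel m₁ m₂ t ^ 3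
        * Real.exp ((2 * rho m₁ m₂ + 2 * μ.re) * t) := by
    have : 0 ≤ 2 * μ.re * shiftedEnergy (rho m₁ m₂) μ u u' t + X
      + (s * shiftedEnergy (rho m₁ m₂) μ u u' t + Y)
      + 2 * (s * (shiftedEnergy (rho m₁ m₂) μ u u' t - v)) := by
      have := mul_nonneg hs e8
      linarith
    positivity
  refine e5.trans_eq ?_
  have e6 : logDel m₁ m₂ t = s + 2 * rho m₁ m₂ := by rw [hsdef]; ring
  simp only [Pi.mul_apply, Pi.pow_apply]
  rw [e6, e7]
  push_cast
  ring

/-- Uniform bound for a solution that is regular at the origin. -/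
lemma IsJacobiSolution.norm_sq_le_of_regular (h : IsJacobiSolution m₁ m₂ μ u u')
    (hu : Continuous u) (hu' : Continuous u') (hu0 : u 0 = 1) (hu'0 : u' 0 = 0)
    (hr : 0 < rho m₁ m₂) (hrμ : rho m₁ m₂ ≤ ‖μ‖) (h0 : 0 ≤ μ.re) (h1 : μ.re ≤ rho m₁ m₂)
    {t : ℝ} (ht : 0 < t) :
    ‖u t‖ ^ 2 ≤ 3 * 2 ^ m₂ * Real.exp (5 * rho m₁ m₂) / normDel m₁ m₂ 1
      * Real.exp (-(2 * rho m₁ m₂ - 2 * μ.re) * t) := by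
  have hμ : 0 < ‖μ‖ ^ 2 := by
    have := hr.trans_le hrμ
    positivity
  have hJ := normDel_pos m₁ m₂ one_pos
  have hloc : ∀ s, 0 ≤ s → localEnergy μ u u' s ≤ ‖μ‖ ^ 2 * Real.exp (3 * rho m₁ m₂ * s) := by
    intro s hs
    have := h.antitoneOn_localEnergy hu hu' hr hrμ h0 h1 (mem_Ici.2 le_rfl) (mem_Ici.2 hs) hs
    have e0 : localEnergy μ u u' 0 = ‖μ‖ ^ 2 := by simp [localEnergy, hu0, hu'0]
    simp only [mul_zero, Real.exp_zero, mul_one, e0] at this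
    rw [neg_mul, Real.exp_neg] at this
    exact (mul_inv_le_iff₀ (Real.exp_pos _)).1 this
  rw [neg_mul, Real.exp_neg]
  rw [← div_eq_mul_inv, le_div_iff₀ (Real.exp_pos _), le_div_iff₀ hJ]
  rcases le_total t 1 with ht1 | ht1
  · have e1 : ‖u t‖ ^ 2 ≤ Real.exp (3 * rho m₁ m₂ * t) := by
      have e2 : ‖μ‖ ^ 2 * ‖u t‖ ^ 2 ≤ localEnergy μ u u' t := by
        rw [localEnergy]
        have := sq_nonneg ‖u' t‖
        linarith
      exact le_of_mul_le_mul_left (e2.trans (hloc t ht.le)) hμ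
    have e3 : ‖u t‖ ^ 2 * Real.exp ((2 * rho m₁ m₂ - 2 * μ.re) * t)
        ≤ Real.exp (5 * rho m₁ m₂) := by
      calc _ ≤ Real.exp (3 * rho m₁ m₂ * t) * Real.exp ((2 * rho m₁ m₂ - 2 * μ.re) * t) := by
            gcongr
        _ = Real.exp ((5 * rho m₁ m₂ - 2 * μ.re) * t) := by
            rw [← Real.exp_add]
            ring_nf
        _ ≤ _ := by
            refine Real.exp_le_exp.2 ?_
            nlinarith [mul_nonneg h0 ht.le, mul_nonneg hr.le (sub_nonneg.2 ht1)]
    calc _ ≤ Real.exp (5 * rho m₁ m₂) * 2 ^ m₂ := by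
          gcongr
          exact normDel_le m₁ m₂ one_pos
      _ ≤ _ := by
          have : 0 < Real.exp (5 * rho m₁ m₂) * 2 ^ m₂ := by positivity
          linarith
  · have hm := neg_le_neg_iff.1 (h.antitoneOn_shiftedEnergy hr hrμ h0
      (mem_Ioi.2 one_pos) (mem_Ioi.2 ht) ht1)
    have e1 : shiftedEnergy (rho m₁ m₂) μ u u' 1 ≤ 3 * (‖μ‖ ^ 2 * Real.exp (3 * rho m₁ m₂)) := by
      refine (shiftedEnergy_le hr.le hrμ 1).trans ?_
      have := hloc 1 zero_le_one
      rw [mul_one] at this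
      linarith
    have e2 : ‖μ‖ ^ 2 * ‖u t‖ ^ 2 ≤ shiftedEnergy (rho m₁ m₂) μ u u' t := by
      rw [shiftedEnergy]
      have := sq_nonneg ‖u' t + rho m₁ m₂ * u t‖
      linarith
    have hJt := normDel_pos m₁ m₂ ht
    have e3 : Real.exp ((2 * rho m₁ m₂ - 2 * μ.re) * 1) ≤ Real.exp (2 * rho m₁ m₂) :=
      Real.exp_le_exp.2 (by linarith)
    have e4 : ‖μ‖ ^ 2 * ‖u t‖ ^ 2 * (normDel m₁ m₂ t)⁻¹
          * Real.exp ((2 * rho m₁ m₂ - 2 * μ.re) * t)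
        ≤ 3 * (‖μ‖ ^ 2 * Real.exp (3 * rho m₁ m₂)) * (normDel m₁ m₂ 1)⁻¹
          * Real.exp (2 * rho m₁ m₂) := by
      refine le_trans (by gcongr) (hm.trans ?_)
      gcongr
    have e5 : Real.exp (5 * rho m₁ m₂) = Real.exp (3 * rho m₁ m₂) * Real.exp (2 * rho m₁ m₂) := by
      rw [← Real.exp_add]
      ring_nf
    have e6 : ‖u t‖ ^ 2 * Real.exp ((2 * rho m₁ m₂ - 2 * μ.re) * t) * normDel m₁ m₂ 1
        ≤ 3 * Real.exp (5 * rho m₁ m₂) * normDel m₁ m₂ t := by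
      rw [e5]
      refine le_of_mul_le_mul_left ?_ hμ
      have e7 := mul_le_mul_of_nonneg_right e4 (mul_pos hJt hJ).le
      generalize Real.exp ((2 * rho m₁ m₂ - 2 * μ.re) * t) = A at e7 ⊢
      generalize Real.exp (3 * rho m₁ m₂) = B at e7 ⊢
      generalize Real.exp (2 * rho m₁ m₂) = D at e7 ⊢
      refine le_trans (le_of_eq ?_) (e7.trans (le_of_eq ?_))
      · field_simp
      · field_simp
    calc _ ≤ _ := e6
      _ ≤ 3 * Real.exp (5 * rho m₁ m₂) * 2 ^ m₂ := by
          gcongr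
          exact normDel_le m₁ m₂ ht
      _ = _ := by ring

/-- Uniform bound for a solution that is normalized at infinity. -/
lemma IsJacobiSolution.norm_mul_Del_sq_le (h : IsJacobiSolution m₁ m₂ μ u u')
    (hinf : ∀ t, 0 < t → shiftedEnergy (rho m₁ m₂) μ u u' t * normDel m₁ m₂ t ^ 3
      * Real.exp ((2 * rho m₁ m₂ + 2 * μ.re) * t) ≤ 2 * ‖μ‖ ^ 2)
    (hr : 0 < rho m₁ m₂) (hrμ : rho m₁ m₂ ≤ ‖μ‖) (h0 : 0 ≤ μ.re) (h1 : μ.re ≤ rho m₁ m₂)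
    {t : ℝ} (ht : 0 < t) :
    (‖u t‖ * Del m₁ m₂ t) ^ 2 ≤ 6 * Real.exp (5 * rho m₁ m₂) / normDel m₁ m₂ 1
      * Real.exp ((2 * rho m₁ m₂ - 2 * μ.re) * t) := by
  have hμ : 0 < ‖μ‖ ^ 2 := by
    have := hr.trans_le hrμ
    positivity
  have hJ := normDel_pos m₁ m₂ one_pos
  rcases le_total t 1 with ht1 | ht1
  · have hm := h.monotoneOn_localEnergy hr hrμ h0 h1 (mem_Ioi.2 ht) (mem_Ioi.2 one_pos) ht1
    have e1 : ‖μ‖ ^ 2 * (‖u t‖ * Del m₁ m₂ t) ^ 2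
        ≤ localEnergy μ u u' t * Del m₁ m₂ t ^ 2 * Real.exp (3 * rho m₁ m₂ * t) := by
      have e2 : ‖μ‖ ^ 2 * ‖u t‖ ^ 2 ≤ localEnergy μ u u' t := by
        rw [localEnergy]
        have := sq_nonneg ‖u' t‖
        linarith
      have e3 : 1 ≤ Real.exp (3 * rho m₁ m₂ * t) := Real.one_le_exp (by positivity)
      calc _ = (‖μ‖ ^ 2 * ‖u t‖ ^ 2) * Del m₁ m₂ t ^ 2 * 1 := by ring
        _ ≤ _ := by
          gcongr
          exact mul_nonneg (localEnergy_nonneg t) (sq_nonneg _)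
    have e4 := (localEnergy_le (u := u) (u' := u') hr.le hrμ 1)
    have e5 := hinf 1 one_pos
    have e6 : Real.exp (2 * rho m₁ m₂) ≤ Real.exp ((2 * rho m₁ m₂ + 2 * μ.re) * 1) := by
      exact Real.exp_le_exp.2 (by linarith)
    have e7 : shiftedEnergy (rho m₁ m₂) μ u u' 1 * normDel m₁ m₂ 1 ^ 3
        * Real.exp (2 * rho m₁ m₂) ≤ 2 * ‖μ‖ ^ 2 := by
      refine le_trans ?_ e5
      have := shiftedEnergy_nonneg (u := u) (u' := u') (μ := μ) (r := rho m₁ m₂) 1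
      exact mul_le_mul_of_nonneg_left e6 (by positivity)
    have e8 : Del m₁ m₂ 1 = Real.exp (2 * rho m₁ m₂) * normDel m₁ m₂ 1 := by
      rw [Del_eq, mul_one]
    have e9 : ‖μ‖ ^ 2 * (‖u t‖ * Del m₁ m₂ t) ^ 2 * normDel m₁ m₂ 1
        ≤ ‖μ‖ ^ 2 * (6 * Real.exp (5 * rho m₁ m₂)) := by
      calc _ ≤ localEnergy μ u u' 1 * Del m₁ m₂ 1 ^ 2 * Real.exp (3 * rho m₁ m₂ * 1)
              * normDel m₁ m₂ 1 :=
            mul_le_mul_of_nonneg_right (e1.trans hm) hJ.le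
        _ ≤ 3 * shiftedEnergy (rho m₁ m₂) μ u u' 1 * Del m₁ m₂ 1 ^ 2
              * Real.exp (3 * rho m₁ m₂ * 1) * normDel m₁ m₂ 1 := by
            gcongr
        _ = 3 * (shiftedEnergy (rho m₁ m₂) μ u u' 1 * normDel m₁ m₂ 1 ^ 3
              * Real.exp (2 * rho m₁ m₂)) * Real.exp (5 * rho m₁ m₂) := by
            have : Real.exp (5 * rho m₁ m₂)
                = Real.exp (3 * rho m₁ m₂) * Real.exp (2 * rho m₁ m₂) := by
              rw [← Real.exp_add]
              ring_nf
            rw [e8, this, mul_one]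
            ring
        _ ≤ 3 * (2 * ‖μ‖ ^ 2) * Real.exp (5 * rho m₁ m₂) := by gcongr
        _ = _ := by ring
    have e10 : (‖u t‖ * Del m₁ m₂ t) ^ 2 ≤ 6 * Real.exp (5 * rho m₁ m₂) / normDel m₁ m₂ 1 := by
      rw [le_div_iff₀ hJ]
      rw [mul_assoc] at e9
      exact le_of_mul_le_mul_left e9 hμ
    refine e10.trans (le_mul_of_one_le_right (by positivity) (Real.one_le_exp ?_))
    exact mul_nonneg (by linarith) ht.le
  · have hJt := normDel_pos m₁ m₂ ht
    have e1 := hinf t ht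
    have e2 : ‖μ‖ ^ 2 * ‖u t‖ ^ 2 ≤ shiftedEnergy (rho m₁ m₂) μ u u' t := by
      rw [shiftedEnergy]
      have := sq_nonneg ‖u' t + rho m₁ m₂ * u t‖
      linarith
    have e3 : ‖u t‖ ^ 2 * normDel m₁ m₂ t ^ 3 * Real.exp ((2 * rho m₁ m₂ + 2 * μ.re) * t) ≤ 2 := by
      refine le_of_mul_le_mul_left ?_ hμ
      calc _ = ‖μ‖ ^ 2 * ‖u t‖ ^ 2 * normDel m₁ m₂ t ^ 3
            * Real.exp ((2 * rho m₁ m₂ + 2 * μ.re) * t) := by ring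
        _ ≤ _ := le_trans (by gcongr) e1
        _ = _ := by ring
    have e4 : normDel m₁ m₂ 1 ≤ normDel m₁ m₂ t :=
      monotoneOn_normDel m₁ m₂ (mem_Ioi.2 one_pos) (mem_Ioi.2 ht) ht1
    have e5 : Real.exp (2 * rho m₁ m₂ * t) ^ 2 = Real.exp ((2 * rho m₁ m₂ + 2 * μ.re) * t)
        * Real.exp ((2 * rho m₁ m₂ - 2 * μ.re) * t) := by
      rw [← Real.exp_add, ← Real.exp_nat_mul]
      congr 1
      push_cast
      ring
    rw [div_mul_eq_mul_div, le_div_iff₀ hJ]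
    calc (‖u t‖ * Del m₁ m₂ t) ^ 2 * normDel m₁ m₂ 1
        ≤ (‖u t‖ * Del m₁ m₂ t) ^ 2 * normDel m₁ m₂ t := by gcongr
      _ = (‖u t‖ ^ 2 * normDel m₁ m₂ t ^ 3 * Real.exp ((2 * rho m₁ m₂ + 2 * μ.re) * t))
          * Real.exp ((2 * rho m₁ m₂ - 2 * μ.re) * t) := by
          rw [Del_eq, mul_pow, mul_pow, e5]
          ring
      _ ≤ 2 * Real.exp ((2 * rho m₁ m₂ - 2 * μ.re) * t) := by gcongr
      _ ≤ _ := by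
          gcongr
          have := Real.one_le_exp (by positivity : 0 ≤ 5 * rho m₁ m₂)
          linarith

end Energy

section JacobiEquation

/-- The ansatz `(cosh t)^(-κ) G(tanh² t)` for solutions of the radial eigenvalue equation. -/
def jacobiAnsatz (κ : ℂ) (G : ℂ → ℂ) (t : ℝ) : ℂ :=
  ((Real.cosh t : ℝ) : ℂ) ^ (-κ) * G (((Real.tanh t) ^ 2 : ℝ) : ℂ)

/-- The derivative of `jacobiAnsatz κ G`, where `G₁` is the derivative of `G`. -/
def jacobiAnsatzDeriv (κ : ℂ) (G G₁ : ℂ → ℂ) (t : ℝ) : ℂ :=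
  ((Real.cosh t : ℝ) : ℂ) ^ (-κ) * (-κ * Real.tanh t * G (((Real.tanh t) ^ 2 : ℝ) : ℂ)
    + 2 * Real.tanh t * (1 - (Real.tanh t : ℂ) ^ 2) * G₁ (((Real.tanh t) ^ 2 : ℝ) : ℂ))

lemma one_sub_tanh_sq (t : ℝ) : 1 - Real.tanh t ^ 2 = (Real.cosh t ^ 2)⁻¹ := by
  have hc := (Real.cosh_pos t).ne'
  rw [Real.tanh_eq_sinh_div_cosh]
  field_simp
  linarith [Real.cosh_sq t]

lemma tanh_sq_lt_one (t : ℝ) : Real.tanh t ^ 2 < 1 := by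
  have h1 := one_sub_tanh_sq t
  have h2 : 0 < (Real.cosh t ^ 2)⁻¹ := by
    have := Real.cosh_pos t
    positivity
  linarith

lemma hasDerivAt_tanh (t : ℝ) : HasDerivAt Real.tanh (1 - Real.tanh t ^ 2) t := by
  have hc := (Real.cosh_pos t).ne'
  have h := (Real.hasDerivAt_sinh t).div (Real.hasDerivAt_cosh t) hc
  have e : Real.tanh = Real.sinh / Real.cosh := by
    ext s
    exact Real.tanh_eq_sinh_div_cosh s
  rw [e]
  convert! h using 1
  rw [Pi.div_apply]
  field_simp

lemma hasDerivAt_cosh_cpow (κ : ℂ) (t : ℝ) :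
    HasDerivAt (fun s : ℝ => ((Real.cosh s : ℝ) : ℂ) ^ (-κ))
      (((Real.cosh t : ℝ) : ℂ) ^ (-κ) * (-κ * Real.tanh t)) t := by
  have e : (fun s : ℝ => ((Real.cosh s : ℝ) : ℂ) ^ (-κ))
      = fun s : ℝ => Complex.exp (-κ * (Real.log (Real.cosh s) : ℝ)) := by
    ext s
    have hc : ((Real.cosh s : ℝ) : ℂ) ≠ 0 := by exact_mod_cast (Real.cosh_pos s).ne'
    rw [Complex.cpow_def_of_ne_zero hc, Complex.ofReal_log (Real.cosh_pos s).le, mul_comm]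
  have h1 : HasDerivAt (fun s : ℝ => Real.log (Real.cosh s)) (Real.tanh t) t := by
    rw [Real.tanh_eq_sinh_div_cosh]
    exact (Real.hasDerivAt_cosh t).log (Real.cosh_pos t).ne'
  have h2 := (h1.ofReal_comp.const_mul (-κ)).cexp
  rw [e, show ((Real.cosh t : ℝ) : ℂ) ^ (-κ) = _ from congrFun e t]
  exact h2

lemma hasDerivAt_ofReal_tanh (t : ℝ) :
    HasDerivAt (fun s : ℝ => (Real.tanh s : ℂ)) (1 - (Real.tanh t : ℂ) ^ 2) t := by
  simpa only [Complex.ofReal_sub, Complex.ofReal_one, Complex.ofReal_pow] using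
    (hasDerivAt_tanh t).ofReal_comp

lemma hasDerivAt_comp_tanh_sq {G : ℂ → ℂ} {G' : ℂ} {t : ℝ}
    (h : HasDerivAt G G' (((Real.tanh t) ^ 2 : ℝ) : ℂ)) :
    HasDerivAt (fun s : ℝ => G (((Real.tanh s) ^ 2 : ℝ) : ℂ))
      (G' * (2 * Real.tanh t * (1 - (Real.tanh t : ℂ) ^ 2))) t := by
  have h1 := ((hasDerivAt_tanh t).pow 2).ofReal_comp
  have h2 := HasDerivAt.comp t (h₂ := G) (h := fun s : ℝ => (((Real.tanh s) ^ 2 : ℝ) : ℂ)) h h1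
  convert! h2 using 1
  push_cast
  ring

lemma hasDerivAt_jacobiAnsatz {κ : ℂ} {G G₁ : ℂ → ℂ} {t : ℝ}
    (h : HasDerivAt G (G₁ (((Real.tanh t) ^ 2 : ℝ) : ℂ)) (((Real.tanh t) ^ 2 : ℝ) : ℂ)) :
    HasDerivAt (jacobiAnsatz κ G) (jacobiAnsatzDeriv κ G G₁ t) t := by
  convert! (hasDerivAt_cosh_cpow κ t).mul (hasDerivAt_comp_tanh_sq h) using 1
  rw [jacobiAnsatzDeriv]
  ring

lemma hasDerivAt_jacobiAnsatzDeriv {m₁ m₂ : ℕ} {μ : ℂ} {G G₁ G₂ : ℂ → ℂ} {t : ℝ} (ht : 0 < t)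
    (h : HasDerivAt G (G₁ (((Real.tanh t) ^ 2 : ℝ) : ℂ)) (((Real.tanh t) ^ 2 : ℝ) : ℂ))
    (h₁ : HasDerivAt G₁ (G₂ (((Real.tanh t) ^ 2 : ℝ) : ℂ)) (((Real.tanh t) ^ 2 : ℝ) : ℂ))
    (hode : ∀ y : ℂ, y = (((Real.tanh t) ^ 2 : ℝ) : ℂ) →
      y * (1 - y) * G₂ y + (((m₁ : ℂ) + m₂ + 1) / 2
        - (((m₁ : ℂ) + 2) / 4 + μ / 2 + (rho m₁ m₂ + μ) / 2 + 1) * y) * G₁ y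
        - (((m₁ : ℂ) + 2) / 4 + μ / 2) * ((rho m₁ m₂ + μ) / 2) * G y = 0) :
    HasDerivAt (jacobiAnsatzDeriv (rho m₁ m₂ + μ) G G₁)
      (-(logDel m₁ m₂ t : ℂ) * jacobiAnsatzDeriv (rho m₁ m₂ + μ) G G₁ t
        - ((rho m₁ m₂ : ℂ) ^ 2 - μ ^ 2) * jacobiAnsatz (rho m₁ m₂ + μ) G t) t := by
  have hT := hasDerivAt_ofReal_tanh t
  have hd := (hasDerivAt_cosh_cpow (rho m₁ m₂ + μ) t).mul
    (((hT.const_mul (-((rho m₁ m₂ : ℂ) + μ))).mul (hasDerivAt_comp_tanh_sq h)).add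
      (((hT.const_mul 2).mul ((hT.pow 2).const_sub 1)).mul (hasDerivAt_comp_tanh_sq h₁)))
  convert! hd using 1
  have hs := Real.sinh_pos_iff.2 ht
  have hc := Real.cosh_pos t
  have hD : (logDel m₁ m₂ t : ℂ) * Real.tanh t
      = (m₁ : ℂ) + m₂ + m₂ * (Real.tanh t : ℂ) ^ 2 := by
    have : logDel m₁ m₂ t * Real.tanh t = (m₁ : ℝ) + m₂ + m₂ * Real.tanh t ^ 2 := by
      rw [logDel, Real.tanh_eq_sinh_div_cosh]
      field_simp
    exact_mod_cast congrArg (fun x : ℝ => (x : ℂ)) this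
  have ho := hode _ rfl
  have hrho : (rho m₁ m₂ : ℂ) = ((m₁ : ℂ) + 2 * m₂) / 2 := by
    rw [rho]
    push_cast
    rfl
  simp only [jacobiAnsatzDeriv, jacobiAnsatz, Pi.mul_apply, Pi.add_apply, Pi.pow_apply]
  generalize G (((Real.tanh t) ^ 2 : ℝ) : ℂ) = g at ho ⊢
  generalize G₁ (((Real.tanh t) ^ 2 : ℝ) : ℂ) = g₁ at ho ⊢
  generalize G₂ (((Real.tanh t) ^ 2 : ℝ) : ℂ) = g₂ at ho ⊢
  generalize ((Real.cosh t : ℝ) : ℂ) ^ (-((rho m₁ m₂ : ℂ) + μ)) = w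
  push_cast at ho ⊢
  rw [hrho] at ho ⊢
  have e1 : Complex.tanh (t : ℂ) = (Real.tanh t : ℂ) := (Complex.ofReal_tanh t).symm
  rw [e1] at ho ⊢
  generalize (Real.tanh t : ℂ) = T at ho hD ⊢
  generalize (logDel m₁ m₂ t : ℂ) = D at hD ⊢
  linear_combination (-(4 * (1 - T ^ 2) * w)) * ho
    - w * (-(((m₁ : ℂ) + 2 * m₂) / 2 + μ) * g + 2 * (1 - T ^ 2) * g₁) * hD

end JacobiEquation

section Solutions

variable {m₁ m₂ : ℕ} {l : ℂ}

lemma IsJacobiSolution.const_mul {μ : ℂ} {u u' : ℝ → ℂ} (h : IsJacobiSolution m₁ m₂ μ u u')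
    (A : ℂ) : IsJacobiSolution m₁ m₂ μ (fun t => A * u t) (fun t => A * u' t) where
  hasDerivAt t ht := (h.hasDerivAt t ht).const_mul A
  hasDerivAt_deriv t ht := by
    convert! (h.hasDerivAt_deriv t ht).const_mul A using 1
    ring

lemma norm_ofReal_tanh_sq_lt_one (t : ℝ) : ‖((Real.tanh t ^ 2 : ℝ) : ℂ)‖ < 1 := by
  rw [Complex.norm_real, Real.norm_of_nonneg (sq_nonneg _)]
  exact tanh_sq_lt_one t

lemma norm_one_sub_tanh_sq_lt_one {t : ℝ} (ht : 0 < t) :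
    ‖1 - ((Real.tanh t ^ 2 : ℝ) : ℂ)‖ < 1 := by
  have h1 := tanh_sq_lt_one t
  have h2 : 0 < Real.tanh t := by
    rw [Real.tanh_eq_sinh_div_cosh]
    exact div_pos (Real.sinh_pos_iff.2 ht) (Real.cosh_pos t)
  have h3 : 0 < Real.tanh t ^ 2 := by positivity
  rw [show (1 : ℂ) - ((Real.tanh t ^ 2 : ℝ) : ℂ) = ((1 - Real.tanh t ^ 2 : ℝ) : ℂ) by push_cast; rfl,
    Complex.norm_real, Real.norm_of_nonneg (by linarith)]
  linarith

lemma neg_I_mul_re (l : ℂ) : (-(Complex.I * l)).re = l.im := by simp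

lemma norm_neg_I_mul (l : ℂ) : ‖-(Complex.I * l)‖ = ‖l‖ := by simp

lemma re_multiplicity_pos (m₁ m₂ : ℕ) : 0 < (((m₁ : ℂ) + m₂ + 1) / 2).re := by
  have : ((m₁ : ℂ) + m₂ + 1) / 2 = (((m₁ + m₂ + 1) / 2 : ℝ) : ℂ) := by push_cast; rfl
  rw [this, Complex.ofReal_re]
  positivity

lemma norm_sph_sq_le (hr : 0 < rho m₁ m₂) (hrl : rho m₁ m₂ ≤ ‖l‖) (h0 : 0 ≤ l.im)
    (h1 : l.im ≤ rho m₁ m₂) {t : ℝ} (ht : 0 < t) :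
    ‖sph m₁ m₂ l t‖ ^ 2 ≤ 3 * 2 ^ m₂ * Real.exp (5 * rho m₁ m₂) / normDel m₁ m₂ 1
      * Real.exp (-(2 * rho m₁ m₂ - 2 * l.im) * t) := by
  have hc := re_multiplicity_pos m₁ m₂
  set a := ((m₁ : ℂ) + 2) / 4 + Complex.I * l / 2 with ha
  set b := ((rho m₁ m₂ : ℂ) + Complex.I * l) / 2 with hb
  set c := ((m₁ : ℂ) + m₂ + 1) / 2 with hcdef
  set u' := jacobiAnsatzDeriv (rho m₁ m₂ + Complex.I * l) (hyp a b c) (hypDeriv a b c) with hu'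
  have hu : sph m₁ m₂ l = jacobiAnsatz (rho m₁ m₂ + Complex.I * l) (hyp a b c) := rfl
  have hd : ∀ s, HasDerivAt (sph m₁ m₂ l) (u' s) s := fun s =>
    hasDerivAt_jacobiAnsatz (hasDerivAt_hyp a b hc (norm_ofReal_tanh_sq_lt_one s))
  have hsol : IsJacobiSolution m₁ m₂ (-(Complex.I * l)) (sph m₁ m₂ l) u' := by
    refine ⟨fun s _ => hd s, fun s hs => ?_⟩
    rw [neg_sq]
    exact hasDerivAt_jacobiAnsatzDeriv (G₂ := hypDeriv₂ a b c) hs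
      (hasDerivAt_hyp a b hc (norm_ofReal_tanh_sq_lt_one s))
      (hasDerivAt_hypDeriv a b hc (norm_ofReal_tanh_sq_lt_one s))
      (fun y hy => hyp_ode a b hc (hy ▸ norm_ofReal_tanh_sq_lt_one s))
  have hcont : Continuous (sph m₁ m₂ l) :=
    continuous_iff_continuousAt.2 fun s => (hd s).continuousAt
  have hcont' : Continuous u' := by
    have e1 : Continuous fun s : ℝ => ((Real.cosh s : ℝ) : ℂ) ^ (-((rho m₁ m₂ : ℂ) + Complex.I * l)) :=
      continuous_iff_continuousAt.2 fun s => (hasDerivAt_cosh_cpow _ s).continuousAt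
    have e2 : Continuous fun s : ℝ => hyp a b c (((Real.tanh s) ^ 2 : ℝ) : ℂ) :=
      continuous_iff_continuousAt.2 fun s => (hasDerivAt_comp_tanh_sq
        (hasDerivAt_hyp a b hc (norm_ofReal_tanh_sq_lt_one s))).continuousAt
    have e3 : Continuous fun s : ℝ => hypDeriv a b c (((Real.tanh s) ^ 2 : ℝ) : ℂ) :=
      continuous_iff_continuousAt.2 fun s => (hasDerivAt_comp_tanh_sq
        (hasDerivAt_hypDeriv a b hc (norm_ofReal_tanh_sq_lt_one s))).continuousAt
    have e4 : Continuous fun s : ℝ => (Real.tanh s : ℂ) :=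
      continuous_iff_continuousAt.2 fun s => (hasDerivAt_ofReal_tanh s).continuousAt
    rw [hu']
    unfold jacobiAnsatzDeriv
    fun_prop
  have hu0 : sph m₁ m₂ l 0 = 1 := by simp [sph, hyp_zero]
  have hu'0 : u' 0 = 0 := by simp [hu', jacobiAnsatzDeriv]
  have := hsol.norm_sq_le_of_regular hcont hcont' hu0 hu'0 hr (by rwa [norm_neg_I_mul])
    (by rwa [neg_I_mul_re]) (by rwa [neg_I_mul_re]) ht
  rwa [neg_I_mul_re] at this

lemma tendsto_tanh_atTop : Tendsto Real.tanh atTop (𝓝 1) := by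
  have h : Tendsto (fun t : ℝ => Real.exp (-2 * t)) atTop (𝓝 0) :=
    Real.tendsto_exp_atBot.comp (tendsto_id.const_mul_atTop_of_neg (by norm_num))
  have h1 := (h.const_sub 1).div (h.const_add 1) (by norm_num)
  have e : Real.tanh = (fun t : ℝ => 1 - Real.exp (-2 * t)) / (fun t : ℝ => 1 + Real.exp (-2 * t)) := by
    ext t
    have hE : Real.exp (-2 * t) = Real.exp (-t) / Real.exp t := by
      rw [← Real.exp_sub]
      ring_nf
    have hp := Real.exp_pos t
    have hp' := Real.exp_pos (-t)
    rw [Pi.div_apply, hE, Real.tanh_eq_sinh_div_cosh, Real.sinh_eq, Real.cosh_eq]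
    field_simp
  rw [e]
  simpa using h1

/-- Rewriting of the solution normalized at infinity in terms of `jacobiAnsatz`. -/
lemma Phi_eq (m₁ m₂ : ℕ) (l : ℂ) (t : ℝ) :
    Phi m₁ m₂ l t = (2 : ℂ) ^ (-((rho m₁ m₂ : ℂ) + -(Complex.I * l)))
      * jacobiAnsatz (rho m₁ m₂ + -(Complex.I * l))
        (fun y => hyp (((rho m₁ m₂ : ℂ) - Complex.I * l) / 2)
          (((m₁ : ℂ) + 2) / 4 - Complex.I * l / 2) (1 - Complex.I * l) (1 - y)) t := by
  have e1 : (1 : ℂ) - ((Real.tanh t ^ 2 : ℝ) : ℂ) = ((Real.cosh t ^ 2 : ℝ) : ℂ)⁻¹ := by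
    rw [← Complex.ofReal_inv, ← one_sub_tanh_sq]
    push_cast
    rfl
  have e2 : Complex.I * l - (rho m₁ m₂ : ℂ) = -((rho m₁ m₂ : ℂ) + -(Complex.I * l)) := by ring
  rw [Phi, jacobiAnsatz, e1, e2, Complex.ofReal_mul,
    Complex.mul_cpow_ofReal_nonneg zero_le_two (Real.cosh_pos t).le, mul_assoc]
  norm_num

lemma norm_two_cpow_mul_cosh_cpow (κ : ℂ) (hκ : 0 ≤ κ.re) {t : ℝ} :
    ‖(2 : ℂ) ^ (-κ) * ((Real.cosh t : ℝ) : ℂ) ^ (-κ)‖ * Real.exp (κ.re * t) ≤ 1 := by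
  have h2 : (2 : ℂ) = ((2 : ℝ) : ℂ) := by norm_num
  have hc := Real.cosh_pos t
  rw [h2, ← Complex.mul_cpow_ofReal_nonneg zero_le_two hc.le, ← Complex.ofReal_mul,
    Complex.norm_cpow_eq_rpow_re_of_pos (by positivity), Complex.neg_re,
    Real.rpow_neg (by positivity), mul_comm κ.re t, Real.exp_mul, inv_mul_le_iff₀ (by positivity),
    mul_one]
  refine Real.rpow_le_rpow (Real.exp_pos _).le ?_ hκ
  rw [Real.cosh_eq]
  linarith [Real.exp_pos (-t)]

lemma norm_Phi_mul_Del_sq_le (hr : 0 < rho m₁ m₂) (hrl : rho m₁ m₂ ≤ ‖l‖) (h0 : 0 ≤ l.im)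
    (h1 : l.im ≤ rho m₁ m₂) {t : ℝ} (ht : 0 < t) :
    (‖Phi m₁ m₂ l t‖ * Del m₁ m₂ t) ^ 2 ≤ 6 * Real.exp (5 * rho m₁ m₂) / normDel m₁ m₂ 1
      * Real.exp ((2 * rho m₁ m₂ - 2 * l.im) * t) := by
  have hc : 0 < (1 - Complex.I * l).re := by
    simp
    linarith
  set μ := -(Complex.I * l) with hμ
  have hμre : μ.re = l.im := neg_I_mul_re l
  have hμnorm : ‖μ‖ = ‖l‖ := norm_neg_I_mul l
  set a := ((rho m₁ m₂ : ℂ) - Complex.I * l) / 2 with ha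
  set b := ((m₁ : ℂ) + 2) / 4 - Complex.I * l / 2 with hb
  set c := 1 - Complex.I * l with hcdef
  set G : ℂ → ℂ := fun y => hyp a b c (1 - y) with hG
  set G₁ : ℂ → ℂ := fun y => -hypDeriv a b c (1 - y) with hG₁
  set G₂ : ℂ → ℂ := fun y => hypDeriv₂ a b c (1 - y) with hG₂
  have hdG : ∀ y : ℂ, ‖1 - y‖ < 1 → HasDerivAt G (G₁ y) y := fun y hy => by
    have := (hasDerivAt_hyp a b hc hy).comp y ((hasDerivAt_id y).const_sub 1)
    simpa [hG₁] using! this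
  have hdG₁ : ∀ y : ℂ, ‖1 - y‖ < 1 → HasDerivAt G₁ (G₂ y) y := fun y hy => by
    have := ((hasDerivAt_hypDeriv a b hc hy).comp y ((hasDerivAt_id y).const_sub 1)).neg
    simpa [hG₂] using! this
  set A := (2 : ℂ) ^ (-((rho m₁ m₂ : ℂ) + μ)) with hA
  set u' := fun s => A * jacobiAnsatzDeriv (rho m₁ m₂ + μ) G G₁ s with hu'
  have hu : Phi m₁ m₂ l = fun s => A * jacobiAnsatz (rho m₁ m₂ + μ) G s :=
    funext fun s => Phi_eq m₁ m₂ l s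
  have hrho : (rho m₁ m₂ : ℂ) = ((m₁ : ℂ) + 2 * m₂) / 2 := by
    rw [rho]
    push_cast
    rfl
  have hsol : IsJacobiSolution m₁ m₂ μ (Phi m₁ m₂ l) u' := by
    rw [hu]
    refine IsJacobiSolution.const_mul ⟨fun s hs => ?_, fun s hs => ?_⟩ A
    · exact hasDerivAt_jacobiAnsatz (hdG _ (norm_one_sub_tanh_sq_lt_one hs))
    · refine hasDerivAt_jacobiAnsatzDeriv (G₂ := G₂) hs
        (hdG _ (norm_one_sub_tanh_sq_lt_one hs)) (hdG₁ _ (norm_one_sub_tanh_sq_lt_one hs)) ?_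
      intro y hy
      have hy1 : ‖1 - y‖ < 1 := hy ▸ norm_one_sub_tanh_sq_lt_one hs
      have ho := hyp_ode a b hc hy1
      simp only [hG, hG₁, hG₂]
      have ea : ((rho m₁ m₂ : ℂ) + μ) / 2 = a := by rw [ha, hμ]; ring
      have eb : ((m₁ : ℂ) + 2) / 4 + μ / 2 = b := by rw [hb, hμ]; ring
      have ec : ((m₁ : ℂ) + m₂ + 1) / 2 = a + b + 1 - c := by
        rw [ha, hb, hcdef, hrho]
        ring
      rw [add_assoc (((m₁ : ℂ) + 2) / 4), add_assoc, ← add_assoc (((m₁ : ℂ) + 2) / 4),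
        ← add_assoc, ea, eb, ec]
      linear_combination ho
  have hmono := hsol.monotoneOn_shiftedEnergy hr (by rwa [hμnorm]) (by rwa [hμre])
  set P : ℝ → ℝ := fun s =>
    (‖(rho m₁ m₂ - (rho m₁ m₂ + μ) * Real.tanh s) * G ((Real.tanh s ^ 2 : ℝ) : ℂ)
      + 2 * Real.tanh s * (1 - (Real.tanh s : ℂ) ^ 2) * G₁ ((Real.tanh s ^ 2 : ℝ) : ℂ)‖ ^ 2
      + ‖μ‖ ^ 2 * ‖G ((Real.tanh s ^ 2 : ℝ) : ℂ)‖ ^ 2) * normDel m₁ m₂ s ^ 3 with hP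
  have hlim : Tendsto P atTop (𝓝 (2 * ‖μ‖ ^ 2)) := by
    have t1 : Tendsto (fun s : ℝ => (Real.tanh s : ℂ)) atTop (𝓝 1) := by
      have := (Complex.continuous_ofReal.tendsto 1).comp tendsto_tanh_atTop
      simp only [Complex.ofReal_one] at this
      exact this
    have t2 : Tendsto (fun s : ℝ => ((Real.tanh s ^ 2 : ℝ) : ℂ)) atTop (𝓝 1) := by
      have := t1.pow 2
      simp only [one_pow] at this
      refine this.congr fun s => ?_
      push_cast
      rfl
    have t3 : Tendsto (fun s : ℝ => G ((Real.tanh s ^ 2 : ℝ) : ℂ)) atTop (𝓝 1) := by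
      have := ((hdG 1 (by simp)).continuousAt.tendsto).comp t2
      simpa [hG, hyp_zero] using! this
    have t4 : Tendsto (fun s : ℝ => G₁ ((Real.tanh s ^ 2 : ℝ) : ℂ)) atTop (𝓝 (G₁ 1)) :=
      ((hdG₁ 1 (by simp)).continuousAt.tendsto).comp t2
    have t5 := ((((((t1.const_mul ((rho m₁ m₂ : ℂ) + μ)).const_sub (rho m₁ m₂ : ℂ)).mul t3).add
      (((t1.const_mul 2).mul ((t1.pow 2).const_sub 1)).mul t4)).norm.pow 2).add
        ((t3.norm.pow 2).const_mul (‖μ‖ ^ 2))).mul ((tendsto_normDel m₁ m₂).pow 3)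
    convert! t5 using 2
    simp
    ring
  have hle : ∀ s, 0 < s → shiftedEnergy (rho m₁ m₂) μ (Phi m₁ m₂ l) u' s * normDel m₁ m₂ s ^ 3
      * Real.exp ((2 * rho m₁ m₂ + 2 * μ.re) * s) ≤ P s := by
    intro s hs
    have hw := norm_two_cpow_mul_cosh_cpow ((rho m₁ m₂ : ℂ) + μ)
      (by simp only [Complex.add_re, Complex.ofReal_re, hμre]; linarith) (t := s)
    rw [← hA] at hw
    have hJ := normDel_pos m₁ m₂ hs
    set W := A * ((Real.cosh s : ℝ) : ℂ) ^ (-((rho m₁ m₂ : ℂ) + μ)) with hW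
    set X := (rho m₁ m₂ - (rho m₁ m₂ + μ) * Real.tanh s) * G ((Real.tanh s ^ 2 : ℝ) : ℂ)
      + 2 * Real.tanh s * (1 - (Real.tanh s : ℂ) ^ 2) * G₁ ((Real.tanh s ^ 2 : ℝ) : ℂ) with hX
    have e1 : Phi m₁ m₂ l s = W * G ((Real.tanh s ^ 2 : ℝ) : ℂ) := by
      rw [hu, hW]
      simp only [jacobiAnsatz]
      ring
    have e2 : u' s + rho m₁ m₂ * Phi m₁ m₂ l s = W * X := by
      rw [e1, hX, hW, hu']
      simp only [jacobiAnsatzDeriv]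
      ring
    have e3 : Real.exp ((2 * rho m₁ m₂ + 2 * μ.re) * s)
        = Real.exp (((rho m₁ m₂ : ℂ) + μ).re * s) ^ 2 := by
      rw [← Real.exp_nat_mul]
      simp only [Complex.add_re, Complex.ofReal_re]
      push_cast
      ring_nf
    rw [shiftedEnergy, e2, e1, e3, norm_mul W X, norm_mul W]
    have e4 : (‖W‖ * Real.exp (((rho m₁ m₂ : ℂ) + μ).re * s)) ^ 2 ≤ 1 :=
      pow_le_one₀ (by positivity) hw
    calc _ = (‖X‖ ^ 2 + ‖μ‖ ^ 2 * ‖G ((Real.tanh s ^ 2 : ℝ) : ℂ)‖ ^ 2) * normDel m₁ m₂ s ^ 3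
          * (‖W‖ * Real.exp (((rho m₁ m₂ : ℂ) + μ).re * s)) ^ 2 := by ring
      _ ≤ (‖X‖ ^ 2 + ‖μ‖ ^ 2 * ‖G ((Real.tanh s ^ 2 : ℝ) : ℂ)‖ ^ 2) * normDel m₁ m₂ s ^ 3 * 1 := by
          gcongr
      _ = P s := mul_one _
  have hinf : ∀ s, 0 < s → shiftedEnergy (rho m₁ m₂) μ (Phi m₁ m₂ l) u' s * normDel m₁ m₂ s ^ 3
      * Real.exp ((2 * rho m₁ m₂ + 2 * μ.re) * s) ≤ 2 * ‖μ‖ ^ 2 := by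
    intro s hs
    refine ge_of_tendsto hlim ?_
    filter_upwards [eventually_ge_atTop s] with r hsr
    exact (hmono (mem_Ioi.2 hs) (mem_Ioi.2 (hs.trans_le hsr)) hsr).trans
      (hle r (hs.trans_le hsr))
  have := hsol.norm_mul_Del_sq_le hinf hr (by rwa [hμnorm]) (by rwa [hμre]) (by rwa [hμre]) ht
  rwa [hμre] at this

end Solutions

section GammaFactor

/-- A bound for `Complex.betaIntegral` on `{u | x ≤ re u} × {v | y ≤ re v}`. -/
def betaBound (x y : ℝ) : ℝ :=
  ∫ s in (0 : ℝ)..1, ‖(s : ℂ) ^ ((x : ℂ) - 1) * (1 - (s : ℂ)) ^ ((y : ℂ) - 1)‖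

lemma betaBound_nonneg (x y : ℝ) : 0 ≤ betaBound x y :=
  intervalIntegral.integral_nonneg zero_le_one fun _ _ => norm_nonneg _

lemma norm_betaIntegral_le {x y : ℝ} (hx : 0 < x) (hy : 0 < y) {u v : ℂ} (hu : x ≤ u.re)
    (hv : y ≤ v.re) : ‖Complex.betaIntegral u v‖ ≤ betaBound x y := by
  have hint := (Complex.betaIntegral_convergent (u := (x : ℂ)) (v := (y : ℂ)) hx hy).norm
  refine intervalIntegral.norm_integral_le_of_norm_le zero_le_one ?_ hint
  filter_upwards [Measure.ae_ne volume (1 : ℝ)] with s hs1 hs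
  have h0 : 0 < s := hs.1
  have h1 : 0 < 1 - s := sub_pos.2 (lt_of_le_of_ne hs.2 hs1)
  have e : (1 : ℂ) - s = ((1 - s : ℝ) : ℂ) := by push_cast; rfl
  rw [norm_mul, norm_mul, e, Complex.norm_cpow_eq_rpow_re_of_pos h0,
    Complex.norm_cpow_eq_rpow_re_of_pos h0, Complex.norm_cpow_eq_rpow_re_of_pos h1,
    Complex.norm_cpow_eq_rpow_re_of_pos h1]
  have a1 : s ^ (u - 1).re ≤ s ^ ((x : ℂ) - 1).re :=
    Real.rpow_le_rpow_of_exponent_ge h0 hs.2 (by simpa using hu)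
  have a2 : (1 - s) ^ (v - 1).re ≤ (1 - s) ^ ((y : ℂ) - 1).re :=
    Real.rpow_le_rpow_of_exponent_ge h1 (by linarith) (by simpa using hv)
  exact mul_le_mul a1 a2 (by positivity) (by positivity)

lemma norm_Gamma_add_natCast_le {z : ℂ} (hz : 0 < z.re) (n : ℕ) :
    ‖Complex.Gamma (z + n)‖ ≤ (‖z‖ + n) ^ n * ‖Complex.Gamma z‖ := by
  induction n with
  | zero => simp
  | succ n ih =>
    have h0 : z + n ≠ 0 := by
      intro h
      have := congrArg Complex.re h
      simp at this
      have hn : (0 : ℝ) ≤ n := n.cast_nonneg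
      linarith
    have h1 : ‖z + n‖ ≤ ‖z‖ + n := (norm_add_le _ _).trans (by simp)
    rw [show z + ((n + 1 : ℕ) : ℂ) = z + n + 1 by push_cast; ring, Complex.Gamma_add_one _ h0,
      norm_mul, pow_succ]
    calc ‖z + n‖ * ‖Complex.Gamma (z + n)‖
        ≤ (‖z‖ + n) * ((‖z‖ + n) ^ n * ‖Complex.Gamma z‖) := by gcongr
      _ ≤ (‖z‖ + (n + 1 : ℕ)) * ((‖z‖ + (n + 1 : ℕ)) ^ n * ‖Complex.Gamma z‖) := by
          push_cast
          gcongr <;> linarith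
      _ = _ := by ring

lemma norm_Gamma_quotient_le {x y c : ℝ} (hx : 0 < x) (hy : 0 < y) (hc : 0 < c) {n : ℕ}
    (hn : 2 * c = n + 1) {a b μ : ℂ} (ha : x ≤ a.re) (hb : y ≤ b.re) (hμ : 0 ≤ μ.re)
    (hab : a + b = c + μ) :
    ‖Complex.Gamma a * Complex.Gamma b / (Complex.Gamma c * Complex.Gamma (1 + μ))‖
      ≤ betaBound x y * betaBound c c / Real.Gamma c ^ 2 * (n + 1) ^ n * (1 + ‖μ‖) ^ n := by
  have hc' : 0 < (c : ℂ).re := by simpa using hc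
  have h1μ : 0 < (1 + μ).re := by simp; linarith
  have hcμ : c ≤ (c + μ).re := by simpa using hμ
  have g1 := Complex.Gamma_mul_Gamma_eq_betaIntegral (hx.trans_le ha) (hy.trans_le hb)
  have g2 := Complex.Gamma_mul_Gamma_eq_betaIntegral (hc.trans_le hcμ) hc'
  have z1 := Complex.Gamma_ne_zero_of_re_pos hc'
  have z2 := Complex.Gamma_ne_zero_of_re_pos h1μ
  have e1 : (c : ℂ) + μ + c = 1 + μ + n := by
    have : (2 : ℂ) * c = n + 1 := by exact_mod_cast congrArg (fun x : ℝ => (x : ℂ)) hn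
    linear_combination this
  rw [hab] at g1
  rw [e1] at g2
  have e2 : Complex.Gamma a * Complex.Gamma b / (Complex.Gamma c * Complex.Gamma (1 + μ))
      = Complex.betaIntegral a b * Complex.betaIntegral (c + μ) c * Complex.Gamma (1 + μ + n)
        / (Complex.Gamma c ^ 2 * Complex.Gamma (1 + μ)) := by
    rw [g1, div_eq_div_iff (mul_ne_zero z1 z2) (mul_ne_zero (pow_ne_zero 2 z1) z2)]
    linear_combination Complex.Gamma c * Complex.Gamma (1 + μ) * Complex.betaIntegral a b * g2
  have hΓ : ‖Complex.Gamma c‖ = Real.Gamma c := by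
    rw [Complex.Gamma_ofReal, Complex.norm_real, Real.norm_of_nonneg (Real.Gamma_pos_of_pos hc).le]
  have b1 := norm_betaIntegral_le hx hy ha hb
  have b2 := norm_betaIntegral_le hc hc hcμ (Complex.ofReal_re c).ge
  have b3 := norm_Gamma_add_natCast_le h1μ n
  have b4 : ‖1 + μ‖ + n ≤ (n + 1) * (1 + ‖μ‖) := by
    have h1 : ‖1 + μ‖ ≤ 1 + ‖μ‖ := (norm_add_le _ _).trans (by simp)
    have h2 : 0 ≤ (n : ℝ) * ‖μ‖ := by positivity
    linarith
  have p1 := Real.Gamma_pos_of_pos hc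
  have p2 := norm_pos_iff.2 z2
  have p3 := betaBound_nonneg x y
  have p4 := betaBound_nonneg c c
  rw [e2, norm_div, norm_mul, norm_mul, norm_mul, norm_pow, hΓ, div_le_iff₀ (by positivity)]
  calc _ ≤ betaBound x y * betaBound c c
        * (((n + 1) * (1 + ‖μ‖)) ^ n * ‖Complex.Gamma (1 + μ)‖) := by
        gcongr
        exact b3.trans (by gcongr)
    _ = _ := by
        rw [mul_pow]
        field_simp

lemma exists_norm_bfun_le (m₁ m₂ : ℕ) (hr : 0 < rho m₁ m₂) :
    ∃ C : ℝ, 0 < C ∧ ∀ l : ℂ, 0 ≤ l.im → l.im ≤ rho m₁ m₂ → ∀ t : ℝ,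
      ‖bfun m₁ m₂ l t‖ ≤ C * (1 + ‖l‖) ^ (m₁ + m₂) * ‖Phi m₁ m₂ l t‖ := by
  set n := m₁ + m₂ with hn
  set c : ℝ := ((m₁ : ℝ) + m₂ + 1) / 2 with hc
  have hc0 : 0 < c := by positivity
  have hy0 : (0 : ℝ) < (m₁ + 2) / 4 := by positivity
  set K := betaBound (rho m₁ m₂ / 2) ((m₁ + 2) / 4) * betaBound c c / Real.Gamma c ^ 2
    * (n + 1) ^ n with hK
  have hK0 : 0 ≤ K := by
    have p3 := betaBound_nonneg (rho m₁ m₂ / 2) ((m₁ + 2) / 4)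
    have p4 := betaBound_nonneg c c
    positivity
  refine ⟨K + 1, by linarith, fun l h0 h1 t => ?_⟩
  have hq := norm_Gamma_quotient_le (n := n) (half_pos hr) hy0 hc0
    (a := ((rho m₁ m₂ : ℂ) - Complex.I * l) / 2) (b := ((m₁ : ℂ) + 2) / 4 - Complex.I * l / 2)
    (μ := -(Complex.I * l)) (by rw [hc, hn]; push_cast; ring) ?_ ?_ (by simpa using h0) ?_
  · have e1 : ((c : ℝ) : ℂ) = ((m₁ : ℂ) + (m₂ : ℂ) + 1) / 2 := by rw [hc]; push_cast; rfl
    rw [e1, norm_neg_I_mul, ← sub_eq_add_neg] at hq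
    have h2 : ‖(2 : ℂ) ^ (-(rho m₁ m₂ : ℂ) - 1 - Complex.I * l)‖ ≤ 1 := by
      rw [show (2 : ℂ) = ((2 : ℝ) : ℂ) by norm_num,
        Complex.norm_cpow_eq_rpow_re_of_pos two_pos]
      refine Real.rpow_le_one_of_one_le_of_nonpos one_le_two ?_
      simp
      linarith
    rw [bfun, norm_mul, norm_mul]
    refine mul_le_mul_of_nonneg_right ?_ (norm_nonneg _)
    calc _ ≤ 1 * (K * (1 + ‖l‖) ^ n) := by gcongr
      _ ≤ (K + 1) * (1 + ‖l‖) ^ n := by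
        rw [one_mul]
        gcongr
        linarith
  · have : (((rho m₁ m₂ : ℂ) - Complex.I * l) / 2).re = (rho m₁ m₂ + l.im) / 2 := by simp
    rw [this]
    linarith
  · have : (((m₁ : ℂ) + 2) / 4 - Complex.I * l / 2).re = ((m₁ : ℝ) + 2) / 4 + l.im / 2 := by
      have e : ((m₁ : ℂ) + 2) / 4 = ((((m₁ : ℝ) + 2) / 4 : ℝ) : ℂ) := by push_cast; rfl
      rw [e]
      simp
      ring
    rw [this]
    linarith
  · rw [hc, rho]
    push_cast
    ring

end GammaFactor

section Kernel

lemma exists_kernel_bound (m₁ m₂ : ℕ) (hr : 0 < rho m₁ m₂) :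
    ∃ C : ℝ, 0 < C ∧ ∀ l : ℂ, 0 ≤ l.im → l.im ≤ rho m₁ m₂ → rho m₁ m₂ ≤ ‖l‖ →
      ∀ t s : ℝ, 0 < t → t < s →
        ‖bfun m₁ m₂ l t‖ * ‖sph m₁ m₂ l s‖ * Del m₁ m₂ t
          ≤ C * (1 + ‖l‖) ^ (m₁ + m₂) * Real.exp (-(rho m₁ m₂ - l.im) * (s - t)) ∧
        ‖sph m₁ m₂ l t‖ * ‖bfun m₁ m₂ l s‖ * Del m₁ m₂ t
          ≤ C * (1 + ‖l‖) ^ (m₁ + m₂) * Real.exp (-(rho m₁ m₂ - l.im) * (s - t)) := by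
  obtain ⟨K, hK, hb⟩ := exists_norm_bfun_le m₁ m₂ hr
  have hJ := normDel_pos m₁ m₂ one_pos
  set A := 3 * 2 ^ m₂ * Real.exp (5 * rho m₁ m₂) / normDel m₁ m₂ 1 with hA
  set B := 6 * Real.exp (5 * rho m₁ m₂) / normDel m₁ m₂ 1 with hB
  have hA0 : 0 < A := by positivity
  have hB0 : 0 < B := by positivity
  refine ⟨K * √(A * B), by positivity, fun l h0 h1 hrl t s ht hts => ?_⟩
  have hs := ht.trans hts
  have hDt := Del_pos m₁ m₂ ht
  have hDs := Del_pos m₁ m₂ hs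
  set δ := rho m₁ m₂ - l.im with hδ
  have key : ∀ x y : ℝ, 0 < x → 0 < y →
      ‖Phi m₁ m₂ l x‖ * Del m₁ m₂ x * ‖sph m₁ m₂ l y‖ ≤ √(A * B) * Real.exp (-δ * (y - x)) := by
    intro x y hx hy
    have hDx := Del_pos m₁ m₂ hx
    refine (sq_le_sq₀ (by positivity) (by positivity)).1 ?_
    have h2 := norm_Phi_mul_Del_sq_le hr hrl h0 h1 hx
    have h3 := norm_sph_sq_le hr hrl h0 h1 hy
    rw [mul_pow, mul_pow (√(A * B)), Real.sq_sqrt (by positivity)]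
    have e : Real.exp (-δ * (y - x)) ^ 2 = Real.exp ((2 * rho m₁ m₂ - 2 * l.im) * x)
        * Real.exp (-(2 * rho m₁ m₂ - 2 * l.im) * y) := by
      rw [← Real.exp_nat_mul, ← Real.exp_add]
      congr 1
      push_cast
      ring
    rw [e]
    calc _ ≤ B * Real.exp ((2 * rho m₁ m₂ - 2 * l.im) * x)
          * (A * Real.exp (-(2 * rho m₁ m₂ - 2 * l.im) * y)) := by gcongr
      _ = _ := by ring
  constructor
  · calc ‖bfun m₁ m₂ l t‖ * ‖sph m₁ m₂ l s‖ * Del m₁ m₂ t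
        ≤ K * (1 + ‖l‖) ^ (m₁ + m₂) * ‖Phi m₁ m₂ l t‖ * ‖sph m₁ m₂ l s‖ * Del m₁ m₂ t := by
          gcongr
          exact hb l h0 h1 t
      _ = K * (1 + ‖l‖) ^ (m₁ + m₂) * (‖Phi m₁ m₂ l t‖ * Del m₁ m₂ t * ‖sph m₁ m₂ l s‖) := by ring
      _ ≤ K * (1 + ‖l‖) ^ (m₁ + m₂) * (√(A * B) * Real.exp (-δ * (s - t))) := by
          exact mul_le_mul_of_nonneg_left (key t s ht hs) (by positivity)
      _ = _ := by ring
  · have hD : Del m₁ m₂ t ≤ Del m₁ m₂ s * Real.exp (-(2 * rho m₁ m₂) * (s - t)) := by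
      have hmono := monotoneOn_normDel m₁ m₂ (mem_Ioi.2 ht) (mem_Ioi.2 hs) hts.le
      have e : Real.exp (2 * rho m₁ m₂ * s) * Real.exp (-(2 * rho m₁ m₂) * (s - t))
          = Real.exp (2 * rho m₁ m₂ * t) := by
        rw [← Real.exp_add]
        congr 1
        ring
      rw [Del_eq m₁ m₂ t, Del_eq m₁ m₂ s,
        mul_right_comm (Real.exp (2 * rho m₁ m₂ * s)), e]
      gcongr
    calc ‖sph m₁ m₂ l t‖ * ‖bfun m₁ m₂ l s‖ * Del m₁ m₂ t
        ≤ ‖sph m₁ m₂ l t‖ * (K * (1 + ‖l‖) ^ (m₁ + m₂) * ‖Phi m₁ m₂ l s‖)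
          * (Del m₁ m₂ s * Real.exp (-(2 * rho m₁ m₂) * (s - t))) := by
          gcongr
          exact hb l h0 h1 s
      _ = K * (1 + ‖l‖) ^ (m₁ + m₂) * (‖Phi m₁ m₂ l s‖ * Del m₁ m₂ s * ‖sph m₁ m₂ l t‖)
          * Real.exp (-(2 * rho m₁ m₂) * (s - t)) := by ring
      _ ≤ K * (1 + ‖l‖) ^ (m₁ + m₂) * (√(A * B) * Real.exp (-δ * (t - s)))
          * Real.exp (-(2 * rho m₁ m₂) * (s - t)) := by
          exact mul_le_mul_of_nonneg_right
            (mul_le_mul_of_nonneg_left (key s t hs ht) (by positivity)) (by positivity)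
      _ = K * √(A * B) * (1 + ‖l‖) ^ (m₁ + m₂)
          * (Real.exp (-δ * (t - s)) * Real.exp (-(2 * rho m₁ m₂) * (s - t))) := by ring
      _ ≤ _ := by
          rw [← Real.exp_add]
          gcongr
          nlinarith

end Kernel

section Integral

lemma ofReal_norm_mul_integral_mul_le {f w : ℝ → ℂ} {D E : ℝ → ℝ} {z : ℂ} {t d : ℝ} (hd : 0 ≤ d)
    (hD : ∀ s, t < s → 0 ≤ D s) (hE : ∀ s, t < s → ‖z‖ * ‖w s‖ * d ≤ E s) :
    ENNReal.ofReal (‖z * ∫ s in Ioi t, f s * w s * (D s : ℂ)‖ * d)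
      ≤ ∫⁻ s in Ioi t, ENNReal.ofReal (‖f s‖ * D s * E s) := by
  have e : ‖z * ∫ s in Ioi t, f s * w s * (D s : ℂ)‖ * d
      = ‖∫ s in Ioi t, z * d * (f s * w s * (D s : ℂ))‖ := by
    rw [integral_const_mul, norm_mul, norm_mul, norm_mul, Complex.norm_real, Real.norm_of_nonneg hd]
    ring
  rw [e, ofReal_norm]
  refine (enorm_integral_le_lintegral_enorm _).trans (setLIntegral_mono' measurableSet_Ioi ?_)
  intro s hs
  rw [← ofReal_norm]
  refine ENNReal.ofReal_le_ofReal ?_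
  have h1 := hD s hs
  simp only [norm_mul, Complex.norm_real, Real.norm_of_nonneg hd, Real.norm_of_nonneg h1]
  calc _ = ‖f s‖ * D s * (‖z‖ * ‖w s‖ * d) := by ring
    _ ≤ _ := mul_le_mul_of_nonneg_left (hE s hs) (by positivity)

lemma lintegral_Iic_exp {δ : ℝ} (hδ : 0 < δ) (s : ℝ) :
    ∫⁻ t in Iic s, ENNReal.ofReal (Real.exp (-δ * (s - t))) = ENNReal.ofReal (1 / δ) := by
  have e : ∀ t, Real.exp (-δ * (s - t)) = Real.exp (-δ * s) * Real.exp (δ * t) := fun t => by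
    rw [← Real.exp_add]
    congr 1
    ring
  simp only [e]
  rw [← ofReal_integral_eq_lintegral_ofReal, integral_const_mul, integral_exp_mul_Iic hδ,
    mul_div_assoc', ← Real.exp_add]
  · simp
  · exact (integrableOn_exp_mul_Iic hδ s).const_mul _
  · exact Eventually.of_forall fun t => by positivity

lemma lintegral_lintegral_exp_le {F : ℝ → ENNReal} (hF : Measurable F) {δ : ℝ} (hδ : 0 < δ) :
    ∫⁻ t in Ioi (0 : ℝ), ∫⁻ s in Ioi t, F s * ENNReal.ofReal (Real.exp (-δ * (s - t)))
      ≤ (∫⁻ s in Ioi (0 : ℝ), F s) * ENNReal.ofReal (1 / δ) := by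
  set H : ℝ → ℝ → ENNReal := fun t s =>
    {p : ℝ × ℝ | p.1 < p.2}.indicator
      (fun p => F p.2 * ENNReal.ofReal (Real.exp (-δ * (p.2 - p.1)))) (t, s) with hH
  have hHm : Measurable (Function.uncurry H) := by
    refine Measurable.indicator (by fun_prop) (measurableSet_lt measurable_fst measurable_snd)
  have h1 : ∀ t, ∫⁻ s in Ioi t, F s * ENNReal.ofReal (Real.exp (-δ * (s - t))) = ∫⁻ s, H t s :=
    fun t => (lintegral_indicator measurableSet_Ioi _).symm
  simp only [h1]
  rw [lintegral_lintegral_swap hHm.aemeasurable, ← lintegral_mul_const _ hF,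
    ← lintegral_indicator measurableSet_Ioi]
  refine lintegral_mono fun s => ?_
  by_cases hs : s ∈ Ioi (0 : ℝ)
  · rw [indicator_of_mem hs, ← lintegral_Iic_exp hδ s, ← lintegral_const_mul _ (by fun_prop),
      ← lintegral_indicator measurableSet_Iic]
    refine (setLIntegral_le_lintegral _ _).trans (lintegral_mono fun t => ?_)
    by_cases ht : t < s
    · rw [indicator_of_mem (mem_Iic.2 ht.le)]
      simp [hH, ht]
    · simp [hH, ht]
  · rw [indicator_of_notMem hs]
    refine (setLIntegral_congr_fun measurableSet_Ioi fun t ht => ?_).trans_le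
      (lintegral_zero (μ := volume.restrict (Ioi (0 : ℝ)))).le
    have : ¬ t < s := fun h => hs ((mem_Ioi.1 ht).trans h)
    simp [hH, this]

end Integral

theorem stmt8 (m₁ m₂ : ℕ) (hm₁ : 1 ≤ m₁) :
    ∃ (C : ℝ) (L : ℕ), 0 < C ∧
      ∀ l : ℂ, 0 < l.im → l.im < rho m₁ m₂ → rho m₁ m₂ ≤ ‖l‖ →
        ∀ f : ℝ → ℂ, Measurable f →
          IntegrableOn (fun s : ℝ => ‖f s‖ * Del m₁ m₂ s) (Set.Ioi 0) →
          (∫⁻ t in Set.Ioi (0 : ℝ), ENNReal.ofReal (‖Tfun m₁ m₂ l f t‖ * Del m₁ m₂ t)) ≤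
            ENNReal.ofReal
              (C * (∫ s in Set.Ioi (0 : ℝ), ‖f s‖ * Del m₁ m₂ s) * (1 + ‖l‖) ^ L /
                (rho m₁ m₂ - l.im)) := by
  have hr := rho_pos hm₁ m₂
  obtain ⟨C, hC, hker⟩ := exists_kernel_bound m₁ m₂ hr
  refine ⟨2 * C, m₁ + m₂, by positivity, fun l h0 h1 hrl f hf hint => ?_⟩
  set δ := rho m₁ m₂ - l.im with hδ
  have hδ0 : 0 < δ := sub_pos.2 h1
  set M := C * (1 + ‖l‖) ^ (m₁ + m₂) with hM
  have hM0 : 0 ≤ M := by positivity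
  have hDm : Measurable (Del m₁ m₂) := by
    unfold Del
    fun_prop
  have hpt : ∀ t ∈ Ioi (0 : ℝ), ENNReal.ofReal (‖Tfun m₁ m₂ l f t‖ * Del m₁ m₂ t)
      ≤ ENNReal.ofReal (2 * M) * ∫⁻ s in Ioi t, ENNReal.ofReal (‖f s‖ * Del m₁ m₂ s)
        * ENNReal.ofReal (Real.exp (-δ * (s - t))) := by
    intro t ht
    have hDt := (Del_pos m₁ m₂ ht).le
    have hDs : ∀ s, t < s → 0 ≤ Del m₁ m₂ s := fun s hs =>
      (Del_pos m₁ m₂ ((mem_Ioi.1 ht).trans hs)).le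
    have b1 := ofReal_norm_mul_integral_mul_le (f := f) hDt hDs
      fun s hs => (hker l h0.le h1.le hrl t s ht hs).1
    have b2 := ofReal_norm_mul_integral_mul_le (f := f) hDt hDs
      fun s hs => (hker l h0.le h1.le hrl t s ht hs).2
    have e : ∫⁻ s in Ioi t, ENNReal.ofReal (‖f s‖ * Del m₁ m₂ s * (M * Real.exp (-δ * (s - t))))
        = ENNReal.ofReal M * ∫⁻ s in Ioi t, ENNReal.ofReal (‖f s‖ * Del m₁ m₂ s)
          * ENNReal.ofReal (Real.exp (-δ * (s - t))) := by
      rw [← lintegral_const_mul' _ _ ENNReal.ofReal_ne_top]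
      refine setLIntegral_congr_fun measurableSet_Ioi fun s hs => ?_
      have := hDs s hs
      rw [← ENNReal.ofReal_mul (by positivity), ← ENNReal.ofReal_mul hM0]
      congr 1
      ring
    rw [e] at b1 b2
    rw [two_mul, ENNReal.ofReal_add hM0 hM0, add_mul]
    refine le_trans ?_ (add_le_add b1 b2)
    rw [← ENNReal.ofReal_add (by positivity) (by positivity), ← add_mul]
    refine ENNReal.ofReal_le_ofReal (mul_le_mul_of_nonneg_right ?_ hDt)
    exact norm_sub_le _ _
  have hae : 0 ≤ᵐ[volume.restrict (Ioi (0 : ℝ))] fun s => ‖f s‖ * Del m₁ m₂ s := by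
    filter_upwards [ae_restrict_mem measurableSet_Ioi] with s hs
    exact mul_nonneg (norm_nonneg _) (Del_pos m₁ m₂ hs).le
  calc ∫⁻ t in Ioi (0 : ℝ), ENNReal.ofReal (‖Tfun m₁ m₂ l f t‖ * Del m₁ m₂ t)
      ≤ ∫⁻ t in Ioi (0 : ℝ), ENNReal.ofReal (2 * M) * ∫⁻ s in Ioi t,
        ENNReal.ofReal (‖f s‖ * Del m₁ m₂ s) * ENNReal.ofReal (Real.exp (-δ * (s - t))) :=
        setLIntegral_mono' measurableSet_Ioi hpt
    _ ≤ ENNReal.ofReal (2 * M) * ((∫⁻ s in Ioi (0 : ℝ), ENNReal.ofReal (‖f s‖ * Del m₁ m₂ s))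
        * ENNReal.ofReal (1 / δ)) := by
        rw [lintegral_const_mul' _ _ ENNReal.ofReal_ne_top]
        gcongr
        exact lintegral_lintegral_exp_le (by fun_prop) hδ0
    _ = _ := by
        rw [← ofReal_integral_eq_lintegral_ofReal hint hae,
          ← ENNReal.ofReal_mul (integral_nonneg_of_ae hae), ← ENNReal.ofReal_mul (by positivity)]
        congr 1
        rw [hM]
        ring

end
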